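/- arXiv:2506.17042 — 5 statements merged into one kernel-verified Lean document; each statement's English description precedes it below -/
import Mathlib

section
/- Let c > 0, γ > 0 and β = (β_1, …, β_r) ∈ ℕ^r, and set |β| = β_1 + ⋯ + β_r. There exist constants 0 < A ≤ B and N ∈ ℕ, depending only on r, c, γ, β, such that for all integers n ≥ N and all x ∈ ℝ^r: A · n^{(r+|β|)/2} ≤ Σ_{m ∈ ℤ^r, ‖m − n x‖ ≤ n^{1/2+γ}} ( Π_{j=1}^r |m_j − n x_j|^{β_j} ) · exp(−c ‖m − n x‖² / n) ≤ B · n^{(r+|β|)/2}, where ‖·‖ denotes the Euclidean norm on ℝ^r. (This is Lemma 2.4, equation (2.6), of the paper, expressed in lattice coordinates; the two-sided bound is uniform in the center x.) -/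
/-!
With `s = √n`, the summand is `s ^ |β|` times the product over `j` of the profiles
`u ↦ |u| ^ β j * exp (-(c * u ^ 2))` evaluated at `(m j - n * x j) / s`. The sum of a rescaled
profile over `ℤ` behaves like a Riemann sum of mesh `1 / s`, so it is of order `s`, uniformly in the
center: from above because the profile decays like `1 / (1 + u ^ 2)` and each interval of length `s`
contains at most `2 * s` integers, from below because the profile is bounded below on a fixed
interval `[p, q)` and `[p * s, q * s)` contains a positive proportion of `s` integers. The upper
bound ignores the window, and the lower bound only uses a box of side of order `s` lying inside it.
-/

open Finset Real

lemma natCast_card_Ico_ceil {a b : ℝ} (hab : a ≤ b) : (#(Ico ⌈a⌉ ⌈b⌉) : ℝ) = ⌈b⌉ - ⌈a⌉ := by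
  have h : (#(Ico ⌈a⌉ ⌈b⌉) : ℤ) = ⌈b⌉ - ⌈a⌉ := Int.card_Ico_of_le _ _ (Int.ceil_mono hab)
  exact_mod_cast h

lemma card_filter_floor_div_eq_le {s : ℝ} (hs : 1 ≤ s) (y : ℝ) (S : Finset ℤ) (q : ℤ) :
    (#{k ∈ S | ⌊((k : ℤ) - y : ℝ) / s⌋ = q} : ℝ) ≤ 2 * s := by
  have hs₀ : 0 < s := one_pos.trans_le hs
  have hsub : {k ∈ S | ⌊((k : ℤ) - y : ℝ) / s⌋ = q} ⊆ Ico ⌈y + q * s⌉ ⌈y + (q + 1) * s⌉ := by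
    intro k hk
    obtain ⟨hqk, hkq⟩ := Int.floor_eq_iff.1 (mem_filter.1 hk).2
    rw [le_div_iff₀ hs₀] at hqk
    rw [div_lt_iff₀ hs₀] at hkq
    rw [mem_Ico, Int.ceil_le, Int.lt_ceil]
    constructor <;> linarith
  calc (#{k ∈ S | ⌊((k : ℤ) - y : ℝ) / s⌋ = q} : ℝ)
      ≤ #(Ico ⌈y + q * s⌉ ⌈y + (q + 1) * s⌉) := by exact_mod_cast card_le_card hsub
    _ = ⌈y + (q + 1) * s⌉ - ⌈y + q * s⌉ := natCast_card_Ico_ceil (by linarith)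
    _ ≤ 2 * s := by
      linarith [Int.ceil_lt_add_one (y + (q + 1) * s), Int.le_ceil (y + q * s)]

lemma sum_comp_floor_div_le_mul_tsum {f : ℤ → ℝ} (hf₀ : 0 ≤ f) (hf : Summable f) {s : ℝ}
    (hs : 1 ≤ s) (y : ℝ) (S : Finset ℤ) :
    ∑ k ∈ S, f ⌊((k : ℝ) - y) / s⌋ ≤ 2 * s * ∑' q, f q := by
  let φ : ℤ → ℤ := fun k ↦ ⌊((k : ℝ) - y) / s⌋
  calc ∑ k ∈ S, f (φ k) = ∑ q ∈ S.image φ, #{k ∈ S | φ k = q} • f q := sum_comp f φ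
    _ ≤ ∑ q ∈ S.image φ, 2 * s * f q := by
      gcongr with q
      rw [nsmul_eq_mul]
      exact mul_le_mul_of_nonneg_right (card_filter_floor_div_eq_le hs y S q) (hf₀ q)
    _ = 2 * s * ∑ q ∈ S.image φ, f q := (mul_sum ..).symm
    _ ≤ 2 * s * ∑' q, f q := by
      gcongr
      exact hf.sum_le_tsum _ fun q _ ↦ hf₀ q

lemma summable_int_one_div_one_add_sq : Summable fun q : ℤ ↦ 1 / (1 + (q : ℝ) ^ 2) := by
  refine .of_norm_bounded_eventually (Real.summable_one_div_int_pow.2 one_lt_two) ?_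
  filter_upwards [(Set.finite_singleton (0 : ℤ)).compl_mem_cofinite] with q hq
  have hq₀ : (q : ℝ) ≠ 0 := Int.cast_ne_zero.2 hq
  rw [norm_of_nonneg (by positivity)]
  gcongr
  linarith

lemma one_add_floor_sq_le (u : ℝ) : 1 + (⌊u⌋ : ℝ) ^ 2 ≤ 3 * (1 + u ^ 2) := by
  nlinarith [Int.floor_le u, Int.lt_floor_add_one u, sq_nonneg (2 * u - ⌊u⌋)]

section Rescaled

variable {g : ℝ → ℝ} {s : ℝ}

lemma sum_rescaled_le {K : ℝ} (hK : 0 ≤ K) (hg : ∀ u, g u ≤ K / (1 + u ^ 2)) (hs : 1 ≤ s) (y : ℝ)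
    (S : Finset ℤ) :
    ∑ k ∈ S, g ((k - y) / s) ≤ 6 * K * (∑' q : ℤ, 1 / (1 + (q : ℝ) ^ 2)) * s := by
  have hfloor (u : ℝ) : g u ≤ 3 * K * (1 / (1 + (⌊u⌋ : ℝ) ^ 2)) := by
    refine (hg u).trans ?_
    rw [mul_one_div, div_le_div_iff₀ (by positivity) (by positivity)]
    linarith [mul_le_mul_of_nonneg_left (one_add_floor_sq_le u) hK]
  calc ∑ k ∈ S, g ((k - y) / s)
      ≤ ∑ k ∈ S, 3 * K * (1 / (1 + (⌊((k : ℝ) - y) / s⌋ : ℝ) ^ 2)) :=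
        sum_le_sum fun k _ ↦ hfloor _
    _ = 3 * K * ∑ k ∈ S, 1 / (1 + (⌊((k : ℝ) - y) / s⌋ : ℝ) ^ 2) := (mul_sum ..).symm
    _ ≤ 3 * K * (2 * s * ∑' q : ℤ, 1 / (1 + (q : ℝ) ^ 2)) := by
      gcongr
      exact sum_comp_floor_div_le_mul_tsum (fun q ↦ by positivity)
        summable_int_one_div_one_add_sq hs y S
    _ = 6 * K * (∑' q : ℤ, 1 / (1 + (q : ℝ) ^ 2)) * s := by ring

lemma mem_Ico_ceil_iff_div_mem_Ico (hs : 0 < s) {p q y : ℝ} {k : ℤ} :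
    k ∈ Ico ⌈y + p * s⌉ ⌈y + q * s⌉ ↔ (k - y) / s ∈ Set.Ico p q := by
  rw [mem_Ico, Int.ceil_le, Int.lt_ceil, Set.mem_Ico, le_div_iff₀ hs, div_lt_iff₀ hs,
    le_sub_iff_add_le', sub_lt_iff_lt_add']

lemma le_sum_rescaled {a p q : ℝ} (ha : 0 ≤ a) (hg : ∀ u ∈ Set.Ico p q, a ≤ g u) (hs : 0 < s)
    (hpq : 2 ≤ (q - p) * s) (y : ℝ) :
    a * ((q - p) / 2) * s ≤ ∑ k ∈ Ico ⌈y + p * s⌉ ⌈y + q * s⌉, g ((k - y) / s) := by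
  have hcard : (q - p) / 2 * s ≤ #(Ico ⌈y + p * s⌉ ⌈y + q * s⌉) := by
    rw [natCast_card_Ico_ceil (by linarith)]
    linarith [Int.ceil_lt_add_one (y + p * s), Int.le_ceil (y + q * s)]
  calc a * ((q - p) / 2) * s = (q - p) / 2 * s * a := by ring
    _ ≤ #(Ico ⌈y + p * s⌉ ⌈y + q * s⌉) * a := by gcongr
    _ = #(Ico ⌈y + p * s⌉ ⌈y + q * s⌉) • a := (nsmul_eq_mul ..).symm
    _ ≤ ∑ k ∈ Ico ⌈y + p * s⌉ ⌈y + q * s⌉, g ((k - y) / s) :=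
      card_nsmul_le_sum _ _ _ fun k hk ↦ hg _ ((mem_Ico_ceil_iff_div_mem_Ico hs).1 hk)

end Rescaled

section PiProducts

variable {ι κ : Type*} [Fintype ι] {f : ι → κ → ℝ} {C : ι → ℝ}

lemma sum_indicator_prod_le_prod (hf : ∀ j k, 0 ≤ f j k)
    (hC : ∀ j, ∀ S : Finset κ, ∑ k ∈ S, f j k ≤ C j) (W : Set (ι → κ)) (S : Finset (ι → κ)) :
    ∑ m ∈ S, W.indicator (fun m ↦ ∏ j, f j (m j)) m ≤ ∏ j, C j := by
  classical
  have hprod (m : ι → κ) : 0 ≤ ∏ j, f j (m j) := prod_nonneg fun j _ ↦ hf j (m j)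
  calc ∑ m ∈ S, W.indicator (fun m ↦ ∏ j, f j (m j)) m
      ≤ ∑ m ∈ S, ∏ j, f j (m j) :=
        sum_le_sum fun m _ ↦ Set.indicator_le_self' (fun m _ ↦ hprod m) m
    _ ≤ ∑ m ∈ Fintype.piFinset fun j ↦ S.image (· j), ∏ j, f j (m j) :=
        sum_le_sum_of_subset_of_nonneg
          (fun m hm ↦ Fintype.mem_piFinset.2 fun j ↦ mem_image_of_mem (· j) hm)
          fun m _ _ ↦ hprod m
    _ = ∏ j, ∑ k ∈ S.image (· j), f j k := (prod_univ_sum _ _).symm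
    _ ≤ ∏ j, C j := prod_le_prod (fun j _ ↦ sum_nonneg fun k _ ↦ hf j k) fun j _ ↦ hC j _

lemma indicator_prod_nonneg (hf : ∀ j k, 0 ≤ f j k) (W : Set (ι → κ)) :
    0 ≤ W.indicator fun m ↦ ∏ j, f j (m j) :=
  Set.indicator_nonneg fun m _ ↦ prod_nonneg fun j _ ↦ hf j (m j)

lemma tsum_indicator_prod_le_prod (hf : ∀ j k, 0 ≤ f j k)
    (hC : ∀ j, ∀ S : Finset κ, ∑ k ∈ S, f j k ≤ C j) (W : Set (ι → κ)) :
    ∑' m, W.indicator (fun m ↦ ∏ j, f j (m j)) m ≤ ∏ j, C j :=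
  Real.tsum_le_of_sum_le (indicator_prod_nonneg hf W) (sum_indicator_prod_le_prod hf hC W)

lemma prod_sum_le_tsum_indicator_prod [DecidableEq ι] (hf : ∀ j k, 0 ≤ f j k)
    (hC : ∀ j, ∀ S : Finset κ, ∑ k ∈ S, f j k ≤ C j) {W : Set (ι → κ)} {t : ι → Finset κ}
    (htW : ∀ m ∈ Fintype.piFinset t, m ∈ W) :
    ∏ j, ∑ k ∈ t j, f j k ≤ ∑' m, W.indicator (fun m ↦ ∏ j, f j (m j)) m := by
  have hsummable : Summable (W.indicator fun m ↦ ∏ j, f j (m j)) :=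
    summable_of_sum_le (indicator_prod_nonneg hf W) (sum_indicator_prod_le_prod hf hC W)
  calc ∏ j, ∑ k ∈ t j, f j k = ∑ m ∈ Fintype.piFinset t, ∏ j, f j (m j) := prod_univ_sum t f
    _ = ∑ m ∈ Fintype.piFinset t, W.indicator (fun m ↦ ∏ j, f j (m j)) m :=
      sum_congr rfl fun m hm ↦ (Set.indicator_of_mem (htW m hm) fun m ↦ ∏ j, f j (m j)).symm
    _ ≤ ∑' m, W.indicator (fun m ↦ ∏ j, f j (m j)) m :=
      hsummable.sum_le_tsum _ fun m _ ↦ indicator_prod_nonneg hf W m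

end PiProducts

section RescaledProducts

variable {ι : Type*} [Fintype ι] {g : ι → ℝ → ℝ} {K : ι → ℝ} {s : ℝ}

lemma tsum_indicator_prod_rescaled_le (hg₀ : ∀ j u, 0 ≤ g j u) (hK : ∀ j, 0 ≤ K j)
    (hg : ∀ j u, g j u ≤ K j / (1 + u ^ 2)) (hs : 1 ≤ s) (y : ι → ℝ) (W : Set (ι → ℤ)) :
    ∑' m, W.indicator (fun m ↦ ∏ j, g j ((m j - y j) / s)) m ≤
      (∏ j, 6 * K j * ∑' q : ℤ, 1 / (1 + (q : ℝ) ^ 2)) * s ^ Fintype.card ι := by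
  rw [← card_univ, prod_mul_pow_card]
  exact tsum_indicator_prod_le_prod (f := fun j (k : ℤ) ↦ g j ((k - y j) / s)) (fun j k ↦ hg₀ j _)
    (fun j ↦ sum_rescaled_le (hK j) (hg j) hs (y j)) W

lemma le_tsum_indicator_prod_rescaled (hg₀ : ∀ j u, 0 ≤ g j u) (hK : ∀ j, 0 ≤ K j)
    (hg : ∀ j u, g j u ≤ K j / (1 + u ^ 2)) {a : ι → ℝ} {p q : ℝ} (ha : ∀ j, 0 ≤ a j)
    (hag : ∀ j, ∀ u ∈ Set.Ico p q, a j ≤ g j u) (hs : 1 ≤ s) (hpq : 2 ≤ (q - p) * s)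
    {y : ι → ℝ} {W : Set (ι → ℤ)}
    (hW : ∀ m : ι → ℤ, (∀ j, (m j - y j) / s ∈ Set.Ico p q) → m ∈ W) :
    (∏ j, a j * ((q - p) / 2)) * s ^ Fintype.card ι ≤
      ∑' m, W.indicator (fun m ↦ ∏ j, g j ((m j - y j) / s)) m := by
  classical
  have hs₀ : 0 < s := one_pos.trans_le hs
  have hpq₀ : 0 < q - p := pos_of_mul_pos_left (two_pos.trans_le hpq) hs₀.le
  calc (∏ j, a j * ((q - p) / 2)) * s ^ Fintype.card ι
      = ∏ j, a j * ((q - p) / 2) * s := by rw [← card_univ, prod_mul_pow_card]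
    _ ≤ ∏ j, ∑ k ∈ Ico ⌈y j + p * s⌉ ⌈y j + q * s⌉, g j ((k - y j) / s) :=
        prod_le_prod (fun j _ ↦ by have := ha j; positivity)
          fun j _ ↦ le_sum_rescaled (ha j) (hag j) hs₀ hpq (y j)
    _ ≤ ∑' m, W.indicator (fun m ↦ ∏ j, g j ((m j - y j) / s)) m :=
      prod_sum_le_tsum_indicator_prod (f := fun j (k : ℤ) ↦ g j ((k - y j) / s)) (fun j k ↦ hg₀ j _)
        (fun j ↦ sum_rescaled_le (hK j) (hg j) hs (y j))
        fun m hm ↦ hW m fun j ↦ (mem_Ico_ceil_iff_div_mem_Ico hs₀).1 (Fintype.mem_piFinset.1 hm j)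

end RescaledProducts

/-- The one-dimensional profile `|u| ^ b * exp (-(c * u ^ 2))` of the summand, in the variable
`u = (m j - n * x j) / √n`. -/
noncomputable def gaussianMonomial (c : ℝ) (b : ℕ) (u : ℝ) : ℝ :=
  |u| ^ b * exp (-(c * u ^ 2))

lemma gaussianMonomial_nonneg (c : ℝ) (b : ℕ) (u : ℝ) : 0 ≤ gaussianMonomial c b u := by
  unfold gaussianMonomial
  positivity

lemma pow_mul_exp_neg_mul_le {c v : ℝ} (hc : 0 < c) (hv : 0 ≤ v) (b : ℕ) :
    v ^ b * exp (-(c * v)) ≤ b.factorial / c ^ b := by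
  have h : (c * v) ^ b / b.factorial ≤ exp (c * v) :=
    pow_div_factorial_le_exp (c * v) (by positivity) b
  rw [div_le_iff₀ (by positivity), mul_pow] at h
  rw [exp_neg, ← div_eq_mul_inv, div_le_div_iff₀ (exp_pos _) (by positivity)]
  linarith

lemma exists_gaussianMonomial_le_div_one_add_sq {c : ℝ} (hc : 0 < c) (b : ℕ) :
    ∃ K, 0 ≤ K ∧ ∀ u, gaussianMonomial c b u ≤ K / (1 + u ^ 2) := by
  let M (i : ℕ) : ℝ := i.factorial / c ^ i
  refine ⟨M 0 + M 1 + M b + M (b + 1), by positivity, fun u ↦ ?_⟩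
  have hM (i : ℕ) : (u ^ 2) ^ i * exp (-(c * u ^ 2)) ≤ M i :=
    pow_mul_exp_neg_mul_le hc (sq_nonneg u) i
  have hpow : |u| ^ b ≤ 1 + (u ^ 2) ^ b := by
    rw [← sq_abs u, pow_right_comm]
    nlinarith [sq_nonneg (|u| ^ b - 1)]
  rw [le_div_iff₀ (by positivity)]
  calc |u| ^ b * exp (-(c * u ^ 2)) * (1 + u ^ 2)
      ≤ (1 + (u ^ 2) ^ b) * exp (-(c * u ^ 2)) * (1 + u ^ 2) := by gcongr
    _ = (u ^ 2) ^ 0 * exp (-(c * u ^ 2)) + (u ^ 2) ^ 1 * exp (-(c * u ^ 2))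
        + (u ^ 2) ^ b * exp (-(c * u ^ 2)) + (u ^ 2) ^ (b + 1) * exp (-(c * u ^ 2)) := by ring
    _ ≤ M 0 + M 1 + M b + M (b + 1) := by gcongr <;> exact hM _

lemma le_gaussianMonomial_of_mem_Ico {c p q u : ℝ} (hc : 0 ≤ c) (hp : 0 ≤ p) (b : ℕ)
    (hu : u ∈ Set.Ico p q) : p ^ b * exp (-(c * q ^ 2)) ≤ gaussianMonomial c b u := by
  have hu₀ : 0 ≤ u := hp.trans hu.1
  rw [gaussianMonomial, abs_of_nonneg hu₀]
  gcongr
  exacts [hu.1, hu.2.le]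

section Window

variable {ι : Type*} [Fintype ι]

lemma prod_abs_pow_mul_exp_eq_prod_gaussianMonomial {t : ℝ} (ht : 0 < t) (c : ℝ) (β : ι → ℕ)
    (v : ι → ℝ) :
    (∏ j, |v j| ^ β j) * exp (-c * (∑ j, v j ^ 2) / t) =
      √t ^ (∑ j, β j) * ∏ j, gaussianMonomial c (β j) (v j / √t) := by
  have hexp : -c * (∑ j, v j ^ 2) / t = ∑ j, -(c * (v j / √t) ^ 2) := by
    simp only [div_pow, sq_sqrt ht.le, mul_sum, sum_div]
    exact sum_congr rfl fun j _ ↦ by ring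
  rw [hexp, exp_sum, ← prod_pow_eq_pow_sum, ← prod_mul_distrib, ← prod_mul_distrib]
  refine prod_congr rfl fun j _ ↦ ?_
  rw [gaussianMonomial, ← mul_assoc, ← mul_pow, abs_div, abs_of_nonneg (sqrt_nonneg t),
    mul_div_cancel₀ _ (sqrt_pos.2 ht).ne']

lemma sqrt_sum_sq_le_sqrt_card_mul {v : ι → ℝ} {M : ℝ} (hM : 0 ≤ M) (hv : ∀ j, |v j| ≤ M) :
    √(∑ j, v j ^ 2) ≤ √(Fintype.card ι) * M := by
  calc √(∑ j, v j ^ 2) ≤ √(∑ _j : ι, M ^ 2) := by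
        gcongr √(∑ j, ?_) with j
        exact sq_le_sq' (abs_le.1 (hv j)).1 (abs_le.1 (hv j)).2
    _ = √(Fintype.card ι) * M := by
        rw [sum_const, card_univ, nsmul_eq_mul, sqrt_mul (Nat.cast_nonneg _), sqrt_sq hM]

lemma exists_box_subset_ball {δ : ℝ} (hδ : 0 < δ) :
    ∃ q > 0, ∀ {s : ℝ} {v : ι → ℝ}, 0 < s → (∀ j, v j / s ∈ Set.Ico (q / 2) q) →
      √(∑ j, v j ^ 2) ≤ δ * s := by
  obtain ⟨q, hq, rfl⟩ : ∃ q > 0, √(Fintype.card ι + 1) * q = δ :=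
    ⟨δ / √(Fintype.card ι + 1), by positivity, mul_div_cancel₀ _ (by positivity)⟩
  refine ⟨q, hq, fun {s v} hs hv ↦ ?_⟩
  have hvq (j : ι) : |v j| ≤ q * s := by
    obtain ⟨hlow, hupp⟩ := hv j
    rw [le_div_iff₀ hs] at hlow
    rw [div_lt_iff₀ hs] at hupp
    rw [abs_of_nonneg (le_trans (by positivity) hlow)]
    exact hupp.le
  calc √(∑ j, v j ^ 2) ≤ √(Fintype.card ι) * (q * s) :=
        sqrt_sum_sq_le_sqrt_card_mul (by positivity) hvq
    _ ≤ √(Fintype.card ι + 1) * (q * s) := by gcongr; linarith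
    _ = √(Fintype.card ι + 1) * q * s := (mul_assoc ..).symm

lemma rpow_card_add_sum_div_two {t : ℝ} (ht : 0 ≤ t) (β : ι → ℕ) :
    t ^ (((Fintype.card ι : ℝ) + ∑ j, (β j : ℝ)) / 2) =
      √t ^ (∑ j, β j) * √t ^ Fintype.card ι := by
  rw [rpow_div_two_eq_sqrt _ ht, ← Nat.cast_sum, ← Nat.cast_add, rpow_natCast, pow_add, mul_comm]

theorem stmt_4_general {c δ : ℝ} (hc : 0 < c) (hδ : 0 < δ) (β : ι → ℕ) :
    ∃ A B T : ℝ, 0 < A ∧ A ≤ B ∧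
      ∀ t : ℝ, T ≤ t → ∀ R : ℝ, δ * √t ≤ R → ∀ y : ι → ℝ,
        A * t ^ (((Fintype.card ι : ℝ) + ∑ j, (β j : ℝ)) / 2) ≤
            (∑' m : ι → ℤ, Set.indicator {m : ι → ℤ | √(∑ j, ((m j : ℝ) - y j) ^ 2) ≤ R}
              (fun m ↦ (∏ j, |(m j : ℝ) - y j| ^ β j) *
                exp (-c * (∑ j, ((m j : ℝ) - y j) ^ 2) / t)) m) ∧
          (∑' m : ι → ℤ, Set.indicator {m : ι → ℤ | √(∑ j, ((m j : ℝ) - y j) ^ 2) ≤ R}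
              (fun m ↦ (∏ j, |(m j : ℝ) - y j| ^ β j) *
                exp (-c * (∑ j, ((m j : ℝ) - y j) ^ 2) / t)) m) ≤
            B * t ^ (((Fintype.card ι : ℝ) + ∑ j, (β j : ℝ)) / 2) := by
  choose K hK hgK using fun j ↦ exists_gaussianMonomial_le_div_one_add_sq hc (β j)
  obtain ⟨q, hq, hbox⟩ := exists_box_subset_ball (ι := ι) hδ
  set a : ι → ℝ := fun j ↦ (q / 2) ^ β j * exp (-(c * q ^ 2))
  set A := ∏ j, a j * ((q - q / 2) / 2)
  set B := ∏ j, 6 * K j * ∑' k : ℤ, 1 / (1 + (k : ℝ) ^ 2)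
  have hqq : 0 < q - q / 2 := by linarith
  refine ⟨A, max A B, max 1 ((2 / (q - q / 2)) ^ 2), prod_pos fun j _ ↦ by positivity,
    le_max_left _ _, fun t hTt R hR y ↦ ?_⟩
  obtain ⟨ht, hqt⟩ := max_le_iff.1 hTt
  have hs : 1 ≤ √t := one_le_sqrt.2 ht
  have hqs : 2 ≤ (q - q / 2) * √t := (div_le_iff₀' hqq).1 (le_sqrt_of_sq_le hqt)
  simp only [prod_abs_pow_mul_exp_eq_prod_gaussianMonomial (one_pos.trans_le ht),
    Set.indicator_const_mul, tsum_mul_left, rpow_card_add_sum_div_two (zero_le_one.trans ht),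
    mul_left_comm _ (√t ^ ∑ j, β j)]
  constructor <;> gcongr
  · exact le_tsum_indicator_prod_rescaled (fun j ↦ gaussianMonomial_nonneg c (β j)) hK hgK
      (fun j ↦ by positivity)
      (fun j u ↦ le_gaussianMonomial_of_mem_Ico hc.le (by positivity) (β j)) hs hqs
      fun m hm ↦ (hbox (by positivity) hm).trans hR
  · refine (tsum_indicator_prod_rescaled_le (fun j ↦ gaussianMonomial_nonneg c (β j)) hK hgK hs y
      _).trans ?_
    gcongr
    exact le_max_right _ _

end Window

lemma sqrt_le_rpow_half_add {t γ : ℝ} (ht : 1 ≤ t) (hγ : 0 ≤ γ) : √t ≤ t ^ ((1 : ℝ) / 2 + γ) := by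
  rw [sqrt_eq_rpow]
  exact rpow_le_rpow_of_exponent_le ht (by linarith)

/-- Lemma 2.4, equation (2.6): two-sided bound, uniform in the center `x ∈ ℝ^r`,
for the Gaussian-polynomial lattice sum over the window `‖m − n x‖ ≤ n^{1/2+γ}`:
it is comparable to `n^{(r+|β|)/2}`. -/
theorem stmt_4 (r : ℕ) (c γ : ℝ) (hc : 0 < c) (hγ : 0 < γ) (β : Fin r → ℕ) :
    ∃ A B : ℝ, ∃ N : ℕ, 0 < A ∧ A ≤ B ∧
      ∀ n : ℕ, N ≤ n → ∀ x : Fin r → ℝ,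
        A * (n : ℝ) ^ (((r : ℝ) + ∑ j, (β j : ℝ)) / 2) ≤
            (∑' m : Fin r → ℤ,
              Set.indicator
                {m : Fin r → ℤ |
                  Real.sqrt (∑ j, ((m j : ℝ) - n * x j) ^ 2) ≤ (n : ℝ) ^ ((1 : ℝ) / 2 + γ)}
                (fun m => (∏ j, |(m j : ℝ) - n * x j| ^ β j) *
                  Real.exp (-c * (∑ j, ((m j : ℝ) - n * x j) ^ 2) / n)) m) ∧
          (∑' m : Fin r → ℤ,
              Set.indicator
                {m : Fin r → ℤ |
                  Real.sqrt (∑ j, ((m j : ℝ) - n * x j) ^ 2) ≤ (n : ℝ) ^ ((1 : ℝ) / 2 + γ)}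
                (fun m => (∏ j, |(m j : ℝ) - n * x j| ^ β j) *
                  Real.exp (-c * (∑ j, ((m j : ℝ) - n * x j) ^ 2) / n)) m) ≤
            B * (n : ℝ) ^ (((r : ℝ) + ∑ j, (β j : ℝ)) / 2) := by
  obtain ⟨A, B, T, hA, hAB, h⟩ := stmt_4_general hc one_pos β
  refine ⟨A, B, max 1 ⌈T⌉₊, hA, hAB, fun n hn x ↦ ?_⟩
  have hn₁ : (1 : ℝ) ≤ n := mod_cast le_of_max_le_left hn
  have hTn : T ≤ n := Nat.ceil_le.1 (le_of_max_le_right hn)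
  simpa only [Fintype.card_fin] using
    h n hTn _ ((one_mul _).trans_le (sqrt_le_rpow_half_add hn₁ hγ.le)) fun j ↦ n * x j
end

section
/- Let c > 0, γ > 0 and β = (β_1, …, β_r) ∈ ℕ^r, and set |β| = β_1 + ⋯ + β_r. There exist constants 0 < A ≤ B and N ∈ ℕ, depending only on r, c, γ, β, such that for all integers n ≥ N and all x ∈ ℝ^r: A · n^{(r+|β|)/2} ≤ Σ_{m ∈ ℤ^r, ‖m − n x‖ ≤ n^{1/2+γ} and ‖m − n x‖_∞ ≥ n^{1/2}} ( Π_{j=1}^r |m_j − n x_j|^{β_j} ) · exp(−c ‖m − n x‖² / n) ≤ B · n^{(r+|β|)/2}, where ‖·‖ is the Euclidean norm and ‖·‖_∞ the supremum norm on ℝ^r. (This is Lemma 2.4, equation (2.7), of the paper: removing the lattice points within distance n^{1/2} of the center in sup-norm does not change the order of the Gaussian-polynomial lattice sum.) -/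
/-!
Rescaling by `s = √n`, the summand factors over the coordinates into one-variable functions
`|t| ^ b * exp (-c t²)` evaluated on the grid `(ℤ - y) / s` of mesh `1 / s ≤ 1`.

For the upper bound every lattice point may be kept. Each factor is `O ((2 + |t|)⁻²)`, which by the
mean value theorem is at most a multiple of `s (arctan (t + 1 / s) - arctan t)`; these increments
telescope to at most `π`.

For the lower bound it suffices to keep the lattice points of the cube `∏ⱼ [yⱼ + s, yⱼ + 2 s]`. They
avoid the removed centre, lie within Euclidean distance `2 √r s` of `y`, hence in the window
as soon as `n ^ γ ≥ 2 √r`, there are at least `(s / 2) ^ r` of them, and each factor is at least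
`exp (-4 c)` on them.
-/

open Filter Finset

section Sums

theorem sum_increments_le_of_monotone {F : ℤ → ℝ} (hF : Monotone F) {C : ℝ}
    (hC : ∀ k l, F k - F l ≤ C) (S : Finset ℤ) : ∑ k ∈ S, (F (k + 1) - F k) ≤ C := by
  let b : ℕ := S.sup Int.natAbs + 1
  have hS : S ⊆ Ico (-b : ℤ) b := fun k hk ↦ by
    have := le_sup (f := Int.natAbs) hk
    rw [mem_Ico]
    lia
  calc ∑ k ∈ S, (F (k + 1) - F k)
      ≤ ∑ k ∈ Ico (-b : ℤ) b, (F (k + 1) - F k) :=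
        sum_le_sum_of_subset_of_nonneg hS fun k _ _ ↦ sub_nonneg.2 (hF (by lia))
    _ = F b - F (-b) := by
        rw [← neg_inj, ← sum_neg_distrib]
        simpa only [neg_sub] using sum_Ico_int_sub b F
    _ ≤ C := hC _ _

variable {ι κ : Type*} [Fintype ι] {f : ι → κ → ℝ} {C : ι → ℝ}

theorem sum_pi_prod_le_prod (hf : ∀ j k, 0 ≤ f j k) (hC : ∀ j (S : Finset κ), ∑ k ∈ S, f j k ≤ C j)
    (U : Finset (ι → κ)) : ∑ m ∈ U, ∏ j, f j (m j) ≤ ∏ j, C j := by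
  classical
  have hU : U ⊆ Fintype.piFinset fun j ↦ U.image (· j) := fun m hm ↦
    Fintype.mem_piFinset.2 fun j ↦ mem_image_of_mem _ hm
  calc ∑ m ∈ U, ∏ j, f j (m j)
      ≤ ∑ m ∈ Fintype.piFinset fun j ↦ U.image (· j), ∏ j, f j (m j) :=
        sum_le_sum_of_subset_of_nonneg hU fun m _ _ ↦ prod_nonneg fun j _ ↦ hf j (m j)
    _ = ∏ j, ∑ k ∈ U.image (· j), f j k := (prod_univ_sum _ _).symm
    _ ≤ ∏ j, C j := prod_le_prod (fun j _ ↦ sum_nonneg fun k _ ↦ hf j k) fun j _ ↦ hC j _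

theorem summable_pi_prod_of_sum_le (hf : ∀ j k, 0 ≤ f j k)
    (hC : ∀ j (S : Finset κ), ∑ k ∈ S, f j k ≤ C j) :
    Summable fun m : ι → κ ↦ ∏ j, f j (m j) :=
  summable_of_sum_le (fun m ↦ prod_nonneg fun j _ ↦ hf j (m j)) (sum_pi_prod_le_prod hf hC)

theorem tsum_pi_prod_le_prod (hf : ∀ j k, 0 ≤ f j k)
    (hC : ∀ j (S : Finset κ), ∑ k ∈ S, f j k ≤ C j) :
    ∑' m : ι → κ, ∏ j, f j (m j) ≤ ∏ j, C j :=
  Real.tsum_le_of_sum_le (fun m ↦ prod_nonneg fun j _ ↦ hf j (m j)) (sum_pi_prod_le_prod hf hC)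

end Sums

section Arctan

theorem div_two_add_abs_sq_le_arctan_sub {t δ : ℝ} (hδ : 0 < δ) (hδ1 : δ ≤ 1) :
    δ / (2 + |t|) ^ 2 ≤ Real.arctan (t + δ) - Real.arctan t := by
  obtain ⟨ξ, ⟨htξ, hξt⟩, hξ⟩ := exists_hasDerivAt_eq_slope Real.arctan _ (lt_add_of_pos_right t hδ)
    Real.continuous_arctan.continuousOn fun u _ ↦ Real.hasDerivAt_arctan u
  rw [add_sub_cancel_left, eq_div_iff hδ.ne', one_div_mul_eq_div] at hξ
  rw [← hξ]
  have hξ_abs : |ξ| ≤ |t| + 1 := by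
    rw [abs_le]
    constructor <;> linarith [neg_abs_le t, le_abs_self t]
  have hξ_sq : ξ ^ 2 ≤ (|t| + 1) ^ 2 := by
    rw [← sq_abs ξ]
    gcongr
  gcongr
  nlinarith [abs_nonneg t]

theorem sum_one_div_two_add_abs_sq_le {s : ℝ} (hs : 1 ≤ s) (y : ℝ) (S : Finset ℤ) :
    ∑ k ∈ S, 1 / (2 + |(k - y) / s|) ^ 2 ≤ Real.pi * s := by
  have hs0 : 0 < s := one_pos.trans_le hs
  let F : ℤ → ℝ := fun k ↦ Real.arctan ((k - y) / s)
  have hF : Monotone F := fun k l hkl ↦ Real.arctan_strictMono.monotone (by gcongr)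
  have hF_sub (k l : ℤ) : F k - F l ≤ Real.pi := by
    have hk : F k < Real.pi / 2 := Real.arctan_lt_pi_div_two _
    have hl : -(Real.pi / 2) < F l := Real.neg_pi_div_two_lt_arctan _
    linarith
  have hterm (k : ℤ) : 1 / (2 + |(k - y) / s|) ^ 2 ≤ s * (F (k + 1) - F k) := by
    have hstep : ((k + 1 : ℤ) - y) / s = (k - y) / s + 1 / s := by
      push_cast
      ring
    have h := div_two_add_abs_sq_le_arctan_sub (t := (k - y) / s) (one_div_pos.2 hs0)
      ((div_le_one hs0).2 hs)
    rw [← hstep, div_right_comm, div_le_iff₀' hs0] at h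
    exact h
  calc ∑ k ∈ S, 1 / (2 + |(k - y) / s|) ^ 2
      ≤ s * ∑ k ∈ S, (F (k + 1) - F k) := by
        rw [mul_sum]
        exact sum_le_sum fun k _ ↦ hterm k
    _ ≤ s * Real.pi := by
        gcongr
        exact sum_increments_le_of_monotone hF hF_sub S
    _ = Real.pi * s := mul_comm _ _

end Arctan

/-- The one-variable factor `|t| ^ b * exp (-c t²)` of the rescaled summand. -/
noncomputable def monomialGaussian (c : ℝ) (b : ℕ) (t : ℝ) : ℝ :=
  |t| ^ b * Real.exp (-c * t ^ 2)

section MonomialGaussian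

variable {c s : ℝ}

theorem monomialGaussian_nonneg (c : ℝ) (b : ℕ) (t : ℝ) : 0 ≤ monomialGaussian c b t := by
  unfold monomialGaussian
  positivity

theorem exists_monomialGaussian_le_div_sq (hc : 0 < c) (b : ℕ) :
    ∃ K : ℝ, 0 < K ∧ ∀ t : ℝ, monomialGaussian c b t ≤ K / (2 + |t|) ^ 2 := by
  refine ⟨(b + 2).factorial * Real.exp (2 + 1 / (4 * c)), by positivity, fun t ↦ ?_⟩
  have hpow : (2 + |t|) ^ (b + 2) ≤ Real.exp (2 + |t|) * (b + 2).factorial :=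
    (div_le_iff₀ (by positivity)).1 (Real.pow_div_factorial_le_exp _ (by positivity) _)
  have hexponent : 2 + |t| + -c * t ^ 2 ≤ 2 + 1 / (4 * c) := by
    have hsquare : 1 / (4 * c) - |t| + c * t ^ 2 = c * (|t| - 1 / (2 * c)) ^ 2 := by
      rw [← sq_abs t]
      field
    have : 0 ≤ c * (|t| - 1 / (2 * c)) ^ 2 := by positivity
    linarith
  rw [le_div_iff₀ (by positivity), monomialGaussian]
  calc |t| ^ b * Real.exp (-c * t ^ 2) * (2 + |t|) ^ 2
      ≤ (2 + |t|) ^ b * Real.exp (-c * t ^ 2) * (2 + |t|) ^ 2 := by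
        gcongr
        linarith
    _ = (2 + |t|) ^ (b + 2) * Real.exp (-c * t ^ 2) := by ring
    _ ≤ Real.exp (2 + |t|) * (b + 2).factorial * Real.exp (-c * t ^ 2) := by gcongr
    _ = (b + 2).factorial * Real.exp (2 + |t| + -c * t ^ 2) := by
        rw [Real.exp_add (2 + |t|)]
        ring
    _ ≤ (b + 2).factorial * Real.exp (2 + 1 / (4 * c)) := by gcongr

theorem exists_sum_monomialGaussian_le (hc : 0 < c) (b : ℕ) :
    ∃ K : ℝ, ∀ s : ℝ, 1 ≤ s → ∀ (y : ℝ) (S : Finset ℤ),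
      ∑ k ∈ S, monomialGaussian c b ((k - y) / s) ≤ K * s := by
  obtain ⟨K, hK, hle⟩ := exists_monomialGaussian_le_div_sq hc b
  refine ⟨K * Real.pi, fun s hs y S ↦ ?_⟩
  calc ∑ k ∈ S, monomialGaussian c b ((k - y) / s)
      ≤ K * ∑ k ∈ S, 1 / (2 + |(k - y) / s|) ^ 2 := by
        rw [mul_sum]
        exact sum_le_sum fun k _ ↦ (hle _).trans_eq (mul_one_div _ _).symm
    _ ≤ K * (Real.pi * s) := by
        gcongr
        exact sum_one_div_two_add_abs_sq_le hs y S
    _ = K * Real.pi * s := (mul_assoc _ _ _).symm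

theorem exp_le_monomialGaussian (hc : 0 ≤ c) (b : ℕ) {t : ℝ} (ht : t ∈ Set.Icc 1 2) :
    Real.exp (-(4 * c)) ≤ monomialGaussian c b t := by
  have hpow : 1 ≤ |t| ^ b := one_le_pow₀ (ht.1.trans (le_abs_self t))
  have hsq : t ^ 2 ≤ 4 := by nlinarith [ht.1, ht.2]
  have hexp : Real.exp (-(4 * c)) ≤ Real.exp (-c * t ^ 2) := by
    gcongr
    nlinarith
  exact hexp.trans (le_mul_of_one_le_left (Real.exp_nonneg _) hpow)

theorem exists_finset_int_sub_mem_Icc (hs : 1 ≤ s) (y : ℝ) :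
    ∃ J : Finset ℤ, s / 2 ≤ #J ∧ ∀ k ∈ J, (k : ℝ) - y ∈ Set.Icc s (2 * s) := by
  refine ⟨Ico ⌈y + s⌉ (⌈y + s⌉ + ⌊s⌋₊), ?_, fun k hk ↦ ?_⟩
  · have hfloor : (1 : ℝ) ≤ ⌊s⌋₊ := by exact_mod_cast Nat.one_le_floor_iff s |>.2 hs
    rw [Int.card_Ico, add_sub_cancel_left, Int.toNat_natCast]
    linarith [Nat.lt_floor_add_one s]
  · rw [mem_Ico] at hk
    have hceil_le : (⌈y + s⌉ : ℝ) ≤ k := by exact_mod_cast hk.1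
    have hlt_ceil : (k : ℝ) + 1 ≤ ⌈y + s⌉ + ⌊s⌋₊ := by exact_mod_cast hk.2
    have hfloor : (⌊s⌋₊ : ℝ) ≤ s := Nat.floor_le (by linarith)
    constructor <;> linarith [Int.le_ceil (y + s), Int.ceil_lt_add_one (y + s)]

theorem exists_finset_le_sum_monomialGaussian (hc : 0 ≤ c) (b : ℕ) (hs : 1 ≤ s) (y : ℝ) :
    ∃ J : Finset ℤ, (∀ k ∈ J, (k : ℝ) - y ∈ Set.Icc s (2 * s)) ∧
      Real.exp (-(4 * c)) / 2 * s ≤ ∑ k ∈ J, monomialGaussian c b ((k - y) / s) := by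
  have hs0 : 0 < s := one_pos.trans_le hs
  obtain ⟨J, hcard, hJ⟩ := exists_finset_int_sub_mem_Icc hs y
  have hterm (k : ℤ) (hk : k ∈ J) :
      Real.exp (-(4 * c)) ≤ monomialGaussian c b ((k - y) / s) :=
    exp_le_monomialGaussian hc b ⟨(one_le_div hs0).2 (hJ k hk).1, (div_le_iff₀ hs0).2 (hJ k hk).2⟩
  refine ⟨J, hJ, ?_⟩
  calc Real.exp (-(4 * c)) / 2 * s
      = s / 2 * Real.exp (-(4 * c)) := by ring
    _ ≤ #J * Real.exp (-(4 * c)) := by gcongr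
    _ ≤ ∑ k ∈ J, monomialGaussian c b ((k - y) / s) := by
        simpa only [nsmul_eq_mul] using card_nsmul_le_sum J _ _ hterm

end MonomialGaussian

section LatticeSum

variable {ι : Type*} [Fintype ι] {c s R : ℝ}

/-- The range of summation: the lattice points at Euclidean distance at most `R` and at sup-norm
distance at least `s` from `y`. -/
def latticeShell (s R : ℝ) (y : ι → ℝ) : Set (ι → ℤ) :=
  {m | √(∑ j, ((m j : ℝ) - y j) ^ 2) ≤ R ∧ s ≤ ⨆ j, |(m j : ℝ) - y j|}

theorem mem_latticeShell_of_sub_mem_Icc [Nonempty ι] (hs : 0 ≤ s)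
    (hR : 2 * √(Fintype.card ι) * s ≤ R) {y : ι → ℝ} {m : ι → ℤ}
    (hm : ∀ j, (m j : ℝ) - y j ∈ Set.Icc s (2 * s)) : m ∈ latticeShell s R y := by
  constructor
  · refine (Real.sqrt_le_left (by positivity)).2 ?_ |>.trans hR
    calc ∑ j, ((m j : ℝ) - y j) ^ 2
        ≤ ∑ _j : ι, (2 * s) ^ 2 :=
          sum_le_sum fun j _ ↦ pow_le_pow_left₀ (hs.trans (hm j).1) (hm j).2 2
      _ = (2 * √(Fintype.card ι) * s) ^ 2 := by
          rw [sum_const, card_univ, nsmul_eq_mul, mul_right_comm, mul_pow _ √_,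
            Real.sq_sqrt (Nat.cast_nonneg _), mul_comm]
  · let i : ι := Classical.arbitrary ι
    calc s ≤ |(m i : ℝ) - y i| := (hm i).1.trans (le_abs_self _)
      _ ≤ ⨆ j, |(m j : ℝ) - y j| :=
          le_ciSup (f := fun j ↦ |(m j : ℝ) - y j|) (Set.finite_range _).bddAbove i

theorem summable_prod_monomialGaussian (hc : 0 < c) (hs : 1 ≤ s) (β : ι → ℕ) (y : ι → ℝ) :
    Summable fun m : ι → ℤ ↦ ∏ j, monomialGaussian c (β j) ((m j - y j) / s) := by
  choose K hle using fun j ↦ exists_sum_monomialGaussian_le hc (β j)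
  exact summable_pi_prod_of_sum_le (f := fun j (k : ℤ) ↦ monomialGaussian c (β j) ((k - y j) / s))
    (fun _ _ ↦ monomialGaussian_nonneg _ _ _) fun j ↦ hle j s hs (y j)

theorem exists_tsum_prod_monomialGaussian_le (hc : 0 < c) (β : ι → ℕ) :
    ∃ K : ℝ, ∀ s : ℝ, 1 ≤ s → ∀ y : ι → ℝ,
      ∑' m : ι → ℤ, ∏ j, monomialGaussian c (β j) ((m j - y j) / s) ≤ K * s ^ Fintype.card ι := by
  choose K hle using fun j ↦ exists_sum_monomialGaussian_le hc (β j)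
  refine ⟨∏ j, K j, fun s hs y ↦ ?_⟩
  calc ∑' m : ι → ℤ, ∏ j, monomialGaussian c (β j) ((m j - y j) / s)
      ≤ ∏ j, K j * s :=
        tsum_pi_prod_le_prod (f := fun j (k : ℤ) ↦ monomialGaussian c (β j) ((k - y j) / s))
          (fun _ _ ↦ monomialGaussian_nonneg _ _ _) fun j ↦ hle j s hs (y j)
    _ = (∏ j, K j) * s ^ Fintype.card ι := by rw [prod_mul_distrib, prod_const, card_univ]

theorem le_tsum_latticeShell_prod_monomialGaussian [Nonempty ι] (hc : 0 < c) (hs : 1 ≤ s)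
    (hR : 2 * √(Fintype.card ι) * s ≤ R) (β : ι → ℕ) (y : ι → ℝ) :
    (Real.exp (-(4 * c)) / 2) ^ Fintype.card ι * s ^ Fintype.card ι ≤
      ∑' m, (latticeShell s R y).indicator
        (fun m ↦ ∏ j, monomialGaussian c (β j) ((m j - y j) / s)) m := by
  classical
  choose J hJ hle using fun j ↦ exists_finset_le_sum_monomialGaussian hc.le (β j) hs (y j)
  set g : (ι → ℤ) → ℝ := fun m ↦ ∏ j, monomialGaussian c (β j) ((m j - y j) / s)
  have hg (m : ι → ℤ) : 0 ≤ g m := prod_nonneg fun j _ ↦ monomialGaussian_nonneg _ _ _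
  have hcube (m : ι → ℤ) (hm : m ∈ Fintype.piFinset J) : m ∈ latticeShell s R y :=
    mem_latticeShell_of_sub_mem_Icc (zero_le_one.trans hs) hR fun j ↦
      hJ j _ (Fintype.mem_piFinset.1 hm j)
  calc (Real.exp (-(4 * c)) / 2) ^ Fintype.card ι * s ^ Fintype.card ι
      = ∏ _j : ι, Real.exp (-(4 * c)) / 2 * s := by rw [prod_const, card_univ, mul_pow]
    _ ≤ ∏ j, ∑ k ∈ J j, monomialGaussian c (β j) ((k - y j) / s) :=
        prod_le_prod (fun _ _ ↦ by positivity) fun j _ ↦ hle j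
    _ = ∑ m ∈ Fintype.piFinset J, g m := prod_univ_sum _ _
    _ = ∑ m ∈ Fintype.piFinset J, (latticeShell s R y).indicator g m :=
        sum_congr rfl fun m hm ↦ (Set.indicator_of_mem (hcube m hm) g).symm
    _ ≤ ∑' m, (latticeShell s R y).indicator g m :=
        ((summable_prod_monomialGaussian hc hs β y).indicator _).sum_le_tsum _ fun m _ ↦
          Set.indicator_nonneg (fun m _ ↦ hg m) m

theorem prod_abs_pow_mul_exp_eq (hs : 0 < s) (β : ι → ℕ) (v : ι → ℝ) :
    (∏ j, |v j| ^ β j) * Real.exp (-c * (∑ j, v j ^ 2) / s ^ 2) =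
      s ^ (∑ j, β j) * ∏ j, monomialGaussian c (β j) (v j / s) := by
  have hexp : Real.exp (-c * (∑ j, v j ^ 2) / s ^ 2) = ∏ j, Real.exp (-c * (v j / s) ^ 2) := by
    rw [← Real.exp_sum, ← mul_sum, mul_div_assoc, sum_div]
    simp only [div_pow]
  rw [hexp, ← prod_pow_eq_pow_sum, ← prod_mul_distrib, ← prod_mul_distrib]
  refine prod_congr rfl fun j _ ↦ ?_
  rw [monomialGaussian, abs_div, abs_of_pos hs, div_pow |v j|]
  field

theorem tsum_indicator_prod_abs_pow_mul_exp_eq (hs : 0 < s) (β : ι → ℕ) (y : ι → ℝ)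
    (T : Set (ι → ℤ)) :
    ∑' m, T.indicator (fun m ↦ (∏ j, |(m j : ℝ) - y j| ^ β j) *
        Real.exp (-c * (∑ j, ((m j : ℝ) - y j) ^ 2) / s ^ 2)) m =
      s ^ (∑ j, β j) *
        ∑' m, T.indicator (fun m ↦ ∏ j, monomialGaussian c (β j) ((m j - y j) / s)) m := by
  rw [← tsum_mul_left]
  refine tsum_congr fun m ↦ ?_
  rw [← Set.indicator_const_mul]
  congr 1
  exact funext fun m ↦ prod_abs_pow_mul_exp_eq hs β fun j ↦ (m j : ℝ) - y j

theorem exists_tsum_latticeShell_bounds [Nonempty ι] (hc : 0 < c) (β : ι → ℕ) :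
    ∃ A B : ℝ, 0 < A ∧ A ≤ B ∧
      ∀ s : ℝ, 1 ≤ s → ∀ R : ℝ, 2 * √(Fintype.card ι) * s ≤ R → ∀ y : ι → ℝ,
      ∑' m, (latticeShell s R y).indicator (fun m ↦ (∏ j, |(m j : ℝ) - y j| ^ β j) *
        Real.exp (-c * (∑ j, ((m j : ℝ) - y j) ^ 2) / s ^ 2)) m ∈
      Set.Icc (A * s ^ (Fintype.card ι + ∑ j, β j)) (B * s ^ (Fintype.card ι + ∑ j, β j)) := by
  obtain ⟨K, htsum⟩ := exists_tsum_prod_monomialGaussian_le hc β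
  refine ⟨(Real.exp (-(4 * c)) / 2) ^ Fintype.card ι, max _ K, by positivity, le_max_left _ _,
    fun s hs R hR y ↦ ?_⟩
  have hs0 : 0 < s := one_pos.trans_le hs
  let g : (ι → ℤ) → ℝ := fun m ↦ ∏ j, monomialGaussian c (β j) ((m j - y j) / s)
  have hg (m : ι → ℤ) : 0 ≤ g m := prod_nonneg fun j _ ↦ monomialGaussian_nonneg _ _ _
  have hsummable : Summable g := summable_prod_monomialGaussian hc hs β y
  rw [tsum_indicator_prod_abs_pow_mul_exp_eq hs0, pow_add, ← mul_assoc, ← mul_assoc,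
    mul_comm (s ^ ∑ j, β j)]
  constructor
  · gcongr
    exact le_tsum_latticeShell_prod_monomialGaussian hc hs hR β y
  · gcongr
    calc ∑' m, (latticeShell s R y).indicator g m
        ≤ ∑' m, g m :=
          (hsummable.indicator _).tsum_le_tsum (Set.indicator_le_self' fun m _ ↦ hg m) hsummable
      _ ≤ K * s ^ Fintype.card ι := htsum s hs y
      _ ≤ max _ K * s ^ Fintype.card ι := by
          gcongr
          exact le_max_right _ _

theorem stmt_5_general [Nonempty ι] (hc : 0 < c) (β : ι → ℕ) :
    ∃ A B : ℝ, 0 < A ∧ A ≤ B ∧ ∀ γ : ℝ, 0 < γ → ∀ᶠ n : ℝ in atTop, ∀ x : ι → ℝ,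
      ∑' m, (latticeShell (n ^ ((1 : ℝ) / 2)) (n ^ ((1 : ℝ) / 2 + γ)) fun j ↦ n * x j).indicator
        (fun m ↦ (∏ j, |(m j : ℝ) - n * x j| ^ β j) *
          Real.exp (-c * (∑ j, ((m j : ℝ) - n * x j) ^ 2) / n)) m ∈
      Set.Icc (A * n ^ (((Fintype.card ι : ℝ) + ∑ j, (β j : ℝ)) / 2))
        (B * n ^ (((Fintype.card ι : ℝ) + ∑ j, (β j : ℝ)) / 2)) := by
  obtain ⟨A, B, hA, hAB, hbounds⟩ := exists_tsum_latticeShell_bounds hc β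
  refine ⟨A, B, hA, hAB, fun γ hγ ↦ ?_⟩
  filter_upwards [eventually_ge_atTop 1,
    (tendsto_rpow_atTop hγ).eventually_ge_atTop (2 * √(Fintype.card ι))] with n hn hnγ x
  have hn0 : 0 < n := one_pos.trans_le hn
  have hs : 1 ≤ n ^ ((1 : ℝ) / 2) := Real.one_le_rpow hn (by norm_num)
  have hR : 2 * √(Fintype.card ι) * n ^ ((1 : ℝ) / 2) ≤ n ^ ((1 : ℝ) / 2 + γ) := by
    rw [Real.rpow_add hn0, mul_comm]
    gcongr
  have hsq : (n ^ ((1 : ℝ) / 2)) ^ 2 = n := by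
    rw [← Real.sqrt_eq_rpow, Real.sq_sqrt hn0.le]
  have hpow : (n ^ ((1 : ℝ) / 2)) ^ (Fintype.card ι + ∑ j, β j) =
      n ^ (((Fintype.card ι : ℝ) + ∑ j, (β j : ℝ)) / 2) := by
    rw [← Real.rpow_mul_natCast hn0.le, one_div_mul_eq_div]
    push_cast
    rfl
  simpa only [hsq, hpow] using hbounds _ hs _ hR fun j ↦ n * x j

end LatticeSum

/-- Lemma 2.4, equation (2.7): the Gaussian-polynomial lattice sum over the window
`‖m − n x‖ ≤ n^{1/2+γ}` with the points of sup-norm distance `< n^{1/2}` from the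
center removed is still comparable to `n^{(r+|β|)/2}`, uniformly in `x ∈ ℝ^r`. -/
theorem stmt_5 (r : ℕ) (hr : 1 ≤ r) (c γ : ℝ) (hc : 0 < c) (hγ : 0 < γ) (β : Fin r → ℕ) :
    ∃ A B : ℝ, ∃ N : ℕ, 0 < A ∧ A ≤ B ∧
      ∀ n : ℕ, N ≤ n → ∀ x : Fin r → ℝ,
        A * (n : ℝ) ^ (((r : ℝ) + ∑ j, (β j : ℝ)) / 2) ≤
            (∑' m : Fin r → ℤ,
              Set.indicator
                {m : Fin r → ℤ |
                  Real.sqrt (∑ j, ((m j : ℝ) - n * x j) ^ 2) ≤ (n : ℝ) ^ ((1 : ℝ) / 2 + γ) ∧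
                    (n : ℝ) ^ ((1 : ℝ) / 2) ≤ ⨆ j, |(m j : ℝ) - n * x j|}
                (fun m => (∏ j, |(m j : ℝ) - n * x j| ^ β j) *
                  Real.exp (-c * (∑ j, ((m j : ℝ) - n * x j) ^ 2) / n)) m) ∧
          (∑' m : Fin r → ℤ,
              Set.indicator
                {m : Fin r → ℤ |
                  Real.sqrt (∑ j, ((m j : ℝ) - n * x j) ^ 2) ≤ (n : ℝ) ^ ((1 : ℝ) / 2 + γ) ∧
                    (n : ℝ) ^ ((1 : ℝ) / 2) ≤ ⨆ j, |(m j : ℝ) - n * x j|}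
                (fun m => (∏ j, |(m j : ℝ) - n * x j| ^ β j) *
                  Real.exp (-c * (∑ j, ((m j : ℝ) - n * x j) ^ 2) / n)) m) ≤
            B * (n : ℝ) ^ (((r : ℝ) + ∑ j, (β j : ℝ)) / 2) := by
  have : Nonempty (Fin r) := ⟨⟨0, hr⟩⟩
  obtain ⟨A, B, hA, hAB, hbounds⟩ := stmt_5_general hc β
  obtain ⟨N, hN⟩ := eventually_atTop.1 (tendsto_natCast_atTop_atTop.eventually (hbounds γ hγ))
  rw [Fintype.card_fin] at hN
  exact ⟨A, B, N, hA, hAB, hN⟩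
end

section
/- Let d ≥ 1 be an integer, p ∈ [1, ∞], and f ∈ L¹(ℝ^d), and set M₁(f) = ∫_{ℝ^d} f(x) dx. Then lim_{t→∞} ‖k_t ⋆ f − M₁(f) · k_t‖_{L^p(ℝ^d)} / ‖k_t‖_{L^p(ℝ^d)} = 0, where k_t ⋆ f denotes convolution; equivalently, (4πt)^{d/(2p')} ‖k_t ⋆ f − M₁(f) k_t‖_{L^p(ℝ^d)} → 0 as t → ∞. (This is the classical Euclidean heat-asymptotic theorem stated in the introduction of the paper, whose non-Archimedean analogue is the paper's main result.) -/
open MeasureTheory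
open scoped ENNReal

/-- The Euclidean heat kernel `k_t(x) = (4πt)^{−d/2} exp(−‖x‖²/(4t))` on `ℝ^d`. -/
noncomputable def euclideanHeatKernel (d : ℕ) (t : ℝ) (x : EuclideanSpace ℝ (Fin d)) : ℝ :=
  (4 * Real.pi * t) ^ (-(d : ℝ) / 2) * Real.exp (-‖x‖ ^ 2 / (4 * t))

/-!
By Minkowski's integral inequality for the finite measure `|f| dy`,
`‖k_t ⋆ f - M₁(f) k_t‖_p ≤ ∫ ‖k_t(· - y) - k_t‖_p |f(y)| dy`, and dominated convergence reduces the
theorem to `‖k_t(· - y) - k_t‖_p / ‖k_t‖_p → 0` for each fixed `y`. A Gaussian is the square of a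
Lipschitz Gaussian `g`, so `a² - b² = (a - b)(a + b)` gives
`‖g(· - y)² - g²‖_p ≤ 2 Lip(g) ‖y‖ ‖g‖_p`; and `g` is a `√2`-dilate of `g²`, so `‖g‖_p` is a fixed
multiple of `‖g²‖_p`. Since `Lip(g)` is of order `t^{-1/2}`, the quotient is `O(‖y‖ / √t)`, for all
`p` at once and without computing any Gaussian integral.
-/

open Filter Function Module
open scoped NNReal Topology

section Minkowski

variable {α β : Type*} [MeasurableSpace α] [MeasurableSpace β] {μ : Measure α} {ν : Measure β}

lemma rpow_lintegral_le_mul_lintegral_rpow_mul {q : ℝ} (hq : 1 ≤ q) {h m : β → ℝ≥0∞}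
    (hh : AEMeasurable h ν) (hm : AEMeasurable m ν)
    (hm_zero : ∀ᵐ y ∂ν, m y ≠ 0) (hm_top : ∀ᵐ y ∂ν, m y ≠ ∞) :
    (∫⁻ y, h y ∂ν) ^ q ≤ (∫⁻ y, m y ∂ν) ^ (q - 1) * ∫⁻ y, h y ^ q * m y ^ (1 - q) ∂ν := by
  have hq0 : 0 < q := by linarith
  have hfactor : ∀ᵐ y ∂ν, h y = (h y ^ q * m y ^ (1 - q)) ^ (1 / q) * m y ^ (1 - 1 / q) := by
    filter_upwards [hm_zero, hm_top] with y hy0 hytop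
    rw [ENNReal.mul_rpow_of_nonneg _ _ (by positivity), ← ENNReal.rpow_mul, ← ENNReal.rpow_mul,
      mul_one_div_cancel hq0.ne', ENNReal.rpow_one, mul_assoc, ← ENNReal.rpow_add _ _ hy0 hytop]
    have hexp : (1 - q) * (1 / q) + (1 - 1 / q) = 0 := by field_simp; ring
    rw [hexp, ENNReal.rpow_zero, mul_one]
  have hholder : ∫⁻ y, h y ∂ν ≤
      (∫⁻ y, h y ^ q * m y ^ (1 - q) ∂ν) ^ (1 / q) * (∫⁻ y, m y ∂ν) ^ (1 - 1 / q) := by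
    rw [lintegral_congr_ae hfactor]
    exact ENNReal.lintegral_mul_norm_pow_le ((hh.pow_const _).mul (hm.pow_const _)) hm
      (by positivity) (sub_nonneg.2 <| (div_le_one hq0).2 hq) (by ring)
  calc (∫⁻ y, h y ∂ν) ^ q
      ≤ ((∫⁻ y, h y ^ q * m y ^ (1 - q) ∂ν) ^ (1 / q) * (∫⁻ y, m y ∂ν) ^ (1 - 1 / q)) ^ q := by
        gcongr
    _ = (∫⁻ y, m y ∂ν) ^ (q - 1) * ∫⁻ y, h y ^ q * m y ^ (1 - q) ∂ν := by
        rw [ENNReal.mul_rpow_of_nonneg _ _ hq0.le, ← ENNReal.rpow_mul, ← ENNReal.rpow_mul,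
          one_div_mul_cancel hq0.ne', ENNReal.rpow_one, sub_mul, one_mul,
          one_div_mul_cancel hq0.ne', mul_comm]

lemma lintegral_rpow_lintegral_le_of_ne_zero [SFinite μ] [SFinite ν] {q : ℝ} (hq : 1 ≤ q)
    {H : α → β → ℝ≥0∞} (hH : Measurable (uncurry H)) {m : β → ℝ≥0∞} (hm : Measurable m)
    (hm_zero : ∀ y, m y ≠ 0) (hHm : ∀ᵐ y ∂ν, ∫⁻ x, H x y ^ q ∂μ ≤ m y ^ q) :
    ∫⁻ x, (∫⁻ y, H x y ∂ν) ^ q ∂μ ≤ (∫⁻ y, m y ∂ν) ^ q := by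
  have hq0 : 0 < q := by linarith
  rcases eq_or_ne (∫⁻ y, m y ∂ν) ∞ with htop | hfin
  · simp [htop, hq0]
  have hm_top : ∀ᵐ y ∂ν, m y ≠ ∞ := (ae_lt_top hm hfin).mono fun y hy => hy.ne
  have hweighted (y : β) (hy : m y ≠ ∞) : m y ^ q * m y ^ (1 - q) = m y := by
    rw [← ENNReal.rpow_add _ _ (hm_zero y) hy, add_sub_cancel, ENNReal.rpow_one]
  calc ∫⁻ x, (∫⁻ y, H x y ∂ν) ^ q ∂μ
      ≤ ∫⁻ x, (∫⁻ y, m y ∂ν) ^ (q - 1) * ∫⁻ y, H x y ^ q * m y ^ (1 - q) ∂ν ∂μ :=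
        lintegral_mono fun x => rpow_lintegral_le_mul_lintegral_rpow_mul hq
          (hH.comp measurable_prodMk_left).aemeasurable hm.aemeasurable
          (ae_of_all _ hm_zero) hm_top
    _ = (∫⁻ y, m y ∂ν) ^ (q - 1) * ∫⁻ y, (∫⁻ x, H x y ^ q ∂μ) * m y ^ (1 - q) ∂ν := by
        rw [lintegral_const_mul' _ _ (ENNReal.rpow_ne_top_of_nonneg (by linarith) hfin),
          lintegral_lintegral_swap (by fun_prop)]
        congr! with y
        exact lintegral_mul_const _ ((hH.comp measurable_prodMk_right).pow_const _)
    _ ≤ (∫⁻ y, m y ∂ν) ^ (q - 1) * ∫⁻ y, m y ∂ν := by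
        refine mul_le_mul_right (lintegral_mono_ae ?_) _
        filter_upwards [hHm, hm_top] with y hy hytop
        calc (∫⁻ x, H x y ^ q ∂μ) * m y ^ (1 - q) ≤ m y ^ q * m y ^ (1 - q) := by gcongr
          _ = m y := hweighted y hytop
    _ = (∫⁻ y, m y ∂ν) ^ q := by
        conv_lhs => rw [← ENNReal.rpow_one (∫⁻ y, m y ∂ν), ← ENNReal.rpow_mul, one_mul]
        rw [← ENNReal.rpow_add_of_nonneg _ _ (by linarith) zero_le_one, sub_add_cancel]

lemma lintegral_rpow_lintegral_le [SFinite μ] [SigmaFinite ν] {q : ℝ} (hq : 1 ≤ q)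
    {H : α → β → ℝ≥0∞} (hH : Measurable (uncurry H)) {m : β → ℝ≥0∞} (hm : Measurable m)
    (hHm : ∀ᵐ y ∂ν, ∫⁻ x, H x y ^ q ∂μ ≤ m y ^ q) :
    ∫⁻ x, (∫⁻ y, H x y ∂ν) ^ q ∂μ ≤ (∫⁻ y, m y ∂ν) ^ q := by
  have hq0 : 0 < q := by linarith
  rw [← ENNReal.rpow_inv_le_iff hq0]
  refine ENNReal.le_of_forall_pos_le_add fun ε hε _ => ?_
  -- A positive weight of small mass removes the zeros of `m`.
  obtain ⟨w, hw_pos, hw, hw_lt⟩ :=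
    exists_pos_lintegral_lt_of_sigmaFinite ν (ENNReal.coe_ne_zero.2 hε.ne')
  have hbound := lintegral_rpow_lintegral_le_of_ne_zero (μ := μ) hq hH
    (hm.add hw.coe_nnreal_ennreal) (ν := ν) (fun y => by simp [(hw_pos y).ne'])
    (hHm.mono fun y hy => hy.trans (by dsimp; gcongr; exact le_self_add))
  calc (∫⁻ x, (∫⁻ y, H x y ∂ν) ^ q ∂μ) ^ q⁻¹ ≤ ∫⁻ y, m y + w y ∂ν :=
        (ENNReal.rpow_inv_le_iff hq0).2 hbound
    _ = ∫⁻ y, m y ∂ν + ∫⁻ y, w y ∂ν := lintegral_add_left hm _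
    _ ≤ ∫⁻ y, m y ∂ν + ε := by gcongr

theorem eLpNorm_lintegral_le [SFinite μ] [SigmaFinite ν] {p : ℝ≥0∞} (hp : 1 ≤ p)
    {H : α → β → ℝ≥0∞} (hH : Measurable (uncurry H)) {m : β → ℝ≥0∞} (hm : Measurable m)
    (hHm : ∀ᵐ y ∂ν, eLpNorm (fun x => H x y) p μ ≤ m y) :
    eLpNorm (fun x => ∫⁻ y, H x y ∂ν) p μ ≤ ∫⁻ y, m y ∂ν := by
  rcases eq_or_ne p ∞ with rfl | hp_top
  · have hae : ∀ᵐ x ∂μ, ∀ᵐ y ∂ν, H x y ≤ m y := by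
      have hset : MeasurableSet {z : α × β | H z.1 z.2 ≤ m z.2} :=
        measurableSet_le hH (hm.comp measurable_snd)
      rw [Measure.ae_ae_comm hset]
      filter_upwards [hHm] with y hy
      exact (enorm_ae_le_eLpNormEssSup _ μ).mono fun x hx => hx.trans hy
    rw [eLpNorm_exponent_top]
    exact eLpNormEssSup_le_of_ae_enorm_bound (hae.mono fun x hx => lintegral_mono_ae hx)
  · have hp_zero : p ≠ 0 := (zero_lt_one.trans_le hp).ne'
    have hq : 1 ≤ p.toReal := by
      simpa using ENNReal.toReal_mono hp_top hp
    have hq0 : 0 < p.toReal := by linarith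
    simp only [eLpNorm_eq_lintegral_rpow_enorm_toReal hp_zero hp_top, one_div,
      ENNReal.rpow_inv_le_iff hq0, enorm_eq_self] at hHm ⊢
    exact lintegral_rpow_lintegral_le hq hH hm hHm

end Minkowski

section Translation

variable {G F : Type*} [MeasurableSpace G] [AddGroup G] {μ : Measure G}
  [NormedAddCommGroup F] [NormedSpace ℝ F] {p : ℝ≥0∞} {k : G → ℝ} {f : G → F}

lemma eLpNorm_translate_sub_le_two_mul [MeasurableAdd G] [μ.IsAddRightInvariant] (hp : 1 ≤ p)
    (hk : Measurable k) (y : G) : eLpNorm (fun x => k (x - y) - k x) p μ ≤ 2 * eLpNorm k p μ := by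
  have hpres := measurePreserving_sub_right μ y
  calc eLpNorm (fun x => k (x - y) - k x) p μ
      ≤ eLpNorm (k ∘ (· - y)) p μ + eLpNorm k p μ :=
        eLpNorm_sub_le (hk.comp hpres.measurable).aestronglyMeasurable hk.aestronglyMeasurable hp
    _ = 2 * eLpNorm k p μ := by
        rw [eLpNorm_comp_measurePreserving hk.aestronglyMeasurable hpres, two_mul]

lemma enorm_integral_smul_sub_smul_integral_le [MeasurableSub G] {C : ℝ}
    (hk : Measurable k) (hkC : ∀ x, ‖k x‖ ≤ C) (hf : Integrable f μ) (x : G) :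
    ‖(∫ y, k (x - y) • f y ∂μ) - k x • ∫ y, f y ∂μ‖ₑ ≤
      ∫⁻ y, ‖k (x - y) - k x‖ₑ ∂(μ.withDensity fun y => ‖f y‖ₑ) := by
  have hint : Integrable (fun y => k (x - y) • f y) μ :=
    hf.bdd_smul C (hk.comp (measurable_const_sub x)).aestronglyMeasurable
      (ae_of_all _ fun y => hkC (x - y))
  calc ‖(∫ y, k (x - y) • f y ∂μ) - k x • ∫ y, f y ∂μ‖ₑ
      = ‖∫ y, (k (x - y) - k x) • f y ∂μ‖ₑ := by
        simp only [sub_smul]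
        rw [integral_sub hint (by exact hf.smul (k x)), integral_smul]
    _ ≤ ∫⁻ y, ‖(k (x - y) - k x) • f y‖ₑ ∂μ := enorm_integral_le_lintegral_enorm _
    _ = ∫⁻ y, ‖k (x - y) - k x‖ₑ ∂(μ.withDensity fun y => ‖f y‖ₑ) := by
        rw [lintegral_withDensity_eq_lintegral_mul₀ hf.1.enorm (by fun_prop)]
        simp only [enorm_smul, Pi.mul_apply, mul_comm]

lemma eLpNorm_integral_smul_sub_smul_integral_le [MeasurableSub₂ G] [SFinite μ] {C : ℝ}
    {ω : G → ℝ≥0∞} (hp : 1 ≤ p) (hk : Measurable k) (hkC : ∀ x, ‖k x‖ ≤ C)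
    (hω : Measurable ω) (hkω : ∀ y, eLpNorm (fun x => k (x - y) - k x) p μ ≤ ω y)
    (hf : Integrable f μ) :
    eLpNorm (fun x => (∫ y, k (x - y) • f y ∂μ) - k x • ∫ y, f y ∂μ) p μ ≤
      ∫⁻ y, ω y * ‖f y‖ₑ ∂μ := by
  have : IsFiniteMeasure (μ.withDensity fun y => ‖f y‖ₑ) := isFiniteMeasure_withDensity hf.2.ne
  calc eLpNorm (fun x => (∫ y, k (x - y) • f y ∂μ) - k x • ∫ y, f y ∂μ) p μ
      ≤ eLpNorm (fun x => ∫⁻ y, ‖k (x - y) - k x‖ₑ ∂(μ.withDensity fun y => ‖f y‖ₑ)) p μ :=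
        eLpNorm_mono_enorm fun x => enorm_integral_smul_sub_smul_integral_le hk hkC hf x
    _ ≤ ∫⁻ y, ω y ∂(μ.withDensity fun y => ‖f y‖ₑ) :=
        eLpNorm_lintegral_le hp (by fun_prop) hω
          (ae_of_all _ fun y => (eLpNorm_enorm _).trans_le (hkω y))
    _ = ∫⁻ y, ω y * ‖f y‖ₑ ∂μ := by
        rw [lintegral_withDensity_eq_lintegral_mul₀ hf.1.enorm hω.aemeasurable]
        simp only [Pi.mul_apply, mul_comm]

theorem eLpNorm_integral_smul_sub_smul_integral_div_le [MeasurableAdd₂ G] [MeasurableNeg G]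
    [SFinite μ] [μ.IsAddRightInvariant] {C : ℝ} {ω : G → ℝ≥0∞} (hp : 1 ≤ p) (hk : Measurable k)
    (hkC : ∀ x, ‖k x‖ ≤ C) (hω : Measurable ω)
    (hkω : ∀ y, eLpNorm (fun x => k (x - y) - k x) p μ ≤ ω y * eLpNorm k p μ)
    (hf : Integrable f μ) :
    eLpNorm (fun x => (∫ y, k (x - y) • f y ∂μ) - k x • ∫ y, f y ∂μ) p μ / eLpNorm k p μ ≤
      ∫⁻ y, min 2 (ω y) * ‖f y‖ₑ ∂μ := by
  refine ENNReal.div_le_of_le_mul ?_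
  have hmin : Measurable fun y => min 2 (ω y) := measurable_const.min hω
  have hbound (y : G) : eLpNorm (fun x => k (x - y) - k x) p μ ≤ min 2 (ω y) * eLpNorm k p μ := by
    rcases min_choice 2 (ω y) with h | h <;> rw [h]
    exacts [eLpNorm_translate_sub_le_two_mul hp hk y, hkω y]
  calc _ ≤ ∫⁻ y, min 2 (ω y) * eLpNorm k p μ * ‖f y‖ₑ ∂μ :=
        eLpNorm_integral_smul_sub_smul_integral_le hp hk hkC (hmin.mul_const _) hbound hf
    _ = (∫⁻ y, min 2 (ω y) * ‖f y‖ₑ ∂μ) * eLpNorm k p μ := by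
        simp_rw [mul_right_comm _ (eLpNorm k p μ)]
        exact lintegral_mul_const'' _ (hmin.aemeasurable.mul hf.1.enorm)

end Translation

lemma tendsto_lintegral_min_mul_zero {α ι : Type*} [MeasurableSpace α] {μ : Measure α}
    {l : Filter ι} [l.IsCountablyGenerated] {c : ℝ≥0∞} (hc : c ≠ ∞) {ω : ι → α → ℝ≥0∞}
    (hω : ∀ i, Measurable (ω i)) (hω_lim : ∀ y, Tendsto (ω · y) l (𝓝 0)) {g : α → ℝ≥0∞}
    (hg : AEMeasurable g μ) (hg_fin : ∫⁻ y, g y ∂μ ≠ ∞) :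
    Tendsto (fun i => ∫⁻ y, min c (ω i y) * g y ∂μ) l (𝓝 0) := by
  rw [← lintegral_zero (μ := μ)]
  refine tendsto_lintegral_filter_of_dominated_convergence' (fun y => c * g y)
    (.of_forall fun i => (measurable_const.min (hω i)).aemeasurable.mul hg)
    (.of_forall fun i => ae_of_all _ fun y => mul_le_mul_left (min_le_left _ _) _) ?_ ?_
  · rw [lintegral_const_mul' _ _ hc]
    exact ENNReal.mul_ne_top hc hg_fin
  · filter_upwards [ae_lt_top' hg hg_fin] with y hy
    have hmin : Tendsto (fun i => min c (ω i y)) l (𝓝 0) := by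
      simpa using tendsto_const_nhds.min (hω_lim y)
    simpa using ENNReal.Tendsto.mul_const hmin (.inr hy.ne)

section Gaussian

lemma eLpNorm_sq_translate_sub_le {E : Type*} [NormedAddCommGroup E] [MeasurableSpace E]
    [BorelSpace E] {μ : Measure E} [μ.IsAddRightInvariant] {p : ℝ≥0∞} (hp : 1 ≤ p) {g : E → ℝ}
    {L : ℝ≥0} (hg : LipschitzWith L g) (y : E) :
    eLpNorm (fun x => g (x - y) ^ 2 - g x ^ 2) p μ ≤ 2 * L * ‖y‖ₑ * eLpNorm g p μ := by
  have hpres := measurePreserving_sub_right μ y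
  have hg_meas : AEStronglyMeasurable g μ := hg.continuous.measurable.aestronglyMeasurable
  have hg_comp : AEStronglyMeasurable (g ∘ (· - y)) μ := hg_meas.comp_measurePreserving hpres
  have hpointwise (x : E) :
      ‖g (x - y) ^ 2 - g x ^ 2‖ₑ ≤ ↑(L * ‖y‖₊) * ‖(g ∘ (· - y) + g) x‖ₑ := by
    have hlip : ‖g (x - y) - g x‖ₑ ≤ L * ‖y‖ₑ := by
      simpa [edist_eq_enorm_sub] using hg (x - y) x
    rw [sq_sub_sq, enorm_mul, mul_comm, ENNReal.coe_mul]
    exact mul_le_mul_left hlip _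
  calc eLpNorm (fun x => g (x - y) ^ 2 - g x ^ 2) p μ
      ≤ ↑(L * ‖y‖₊) * eLpNorm (g ∘ (· - y) + g) p μ :=
        eLpNorm_le_mul_eLpNorm_of_ae_le_mul' (ae_of_all _ hpointwise) p
    _ ≤ ↑(L * ‖y‖₊) * (eLpNorm (g ∘ (· - y)) p μ + eLpNorm g p μ) := by
        gcongr
        exact eLpNorm_add_le hg_comp hg_meas hp
    _ = 2 * L * ‖y‖ₑ * eLpNorm g p μ := by
        rw [eLpNorm_comp_measurePreserving hg_meas hpres, ENNReal.coe_mul, enorm_eq_nnnorm]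
        ring

lemma lipschitzWith_exp_neg_mul_sq {b : ℝ} (hb : 0 ≤ b) :
    LipschitzWith (√b).toNNReal fun s : ℝ => Real.exp (-b * s ^ 2) := by
  have hderiv (s : ℝ) : HasDerivAt (fun s : ℝ => Real.exp (-b * s ^ 2))
      (Real.exp (-b * s ^ 2) * (-b * (2 * s))) s := by
    simpa using ((hasDerivAt_pow 2 s).const_mul (-b)).exp
  refine lipschitzWith_of_nnnorm_deriv_le (fun s => (hderiv s).differentiableAt) fun s => ?_
  rw [(hderiv s).deriv, ← norm_toNNReal, Real.norm_eq_abs]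
  refine Real.toNNReal_le_toNNReal ?_
  have hsqrt : √b * √b = b := Real.mul_self_sqrt hb
  have hamgm : 2 * (√b * |s|) ≤ Real.exp (b * s ^ 2) :=
    calc 2 * (√b * |s|) ≤ (√b * |s|) ^ 2 + 1 := by linarith [two_mul_le_add_sq (√b * |s|) 1]
      _ = b * s ^ 2 + 1 := by rw [mul_pow, sq_abs, Real.sq_sqrt hb]
      _ ≤ Real.exp (b * s ^ 2) := Real.add_one_le_exp _
  calc |Real.exp (-b * s ^ 2) * (-b * (2 * s))|
      = √b * (Real.exp (-b * s ^ 2) * (2 * (√b * |s|))) := by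
        rw [abs_mul, Real.abs_exp, abs_mul, abs_neg, abs_mul, abs_two, abs_of_nonneg hb]
        linear_combination (-2 * Real.exp (-b * s ^ 2) * |s|) * hsqrt
    _ ≤ √b * (Real.exp (-b * s ^ 2) * Real.exp (b * s ^ 2)) := by gcongr
    _ = √b := by rw [← Real.exp_add, neg_mul, neg_add_cancel, Real.exp_zero, mul_one]

lemma lipschitzWith_exp_neg_mul_norm_sq {E : Type*} [SeminormedAddCommGroup E] {b : ℝ}
    (hb : 0 ≤ b) : LipschitzWith (√b).toNNReal fun x : E => Real.exp (-b * ‖x‖ ^ 2) := by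
  simpa [comp_def] using (lipschitzWith_exp_neg_mul_sq hb).comp lipschitzWith_one_norm

variable {E : Type*} [NormedAddCommGroup E] [NormedSpace ℝ E] [FiniteDimensional ℝ E]
  [MeasurableSpace E] [BorelSpace E] (μ : Measure E) [μ.IsAddHaarMeasure] (p : ℝ≥0∞)

lemma eLpNorm_comp_const_smul {F : Type*} [NormedAddCommGroup F] {r : ℝ} (hr : r ≠ 0)
    (g : E → F) :
    eLpNorm (fun x => g (r • x)) p μ =
      ENNReal.ofReal |(r ^ finrank ℝ E)⁻¹| ^ (1 / p).toReal * eLpNorm g p μ := by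
  have hscale : ENNReal.ofReal |(r ^ finrank ℝ E)⁻¹| ≠ 0 := by
    rw [ENNReal.ofReal_ne_zero_iff]
    positivity
  have hembed : MeasurableEmbedding fun x : E => r • x := measurableEmbedding_const_smul₀ hr
  rw [← smul_eq_mul, ← eLpNorm_smul_measure_of_ne_zero hscale, ← Measure.map_addHaar_smul μ hr,
    hembed.eLpNorm_map_measure, comp_def]

lemma eLpNorm_exp_neg_half_mul_norm_sq (b : ℝ) :
    eLpNorm (fun x : E => Real.exp (-(b / 2) * ‖x‖ ^ 2)) p μ =
      ENNReal.ofReal (√2 ^ finrank ℝ E) ^ (1 / p).toReal *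
        eLpNorm (fun x : E => Real.exp (-b * ‖x‖ ^ 2)) p μ := by
  have hdilate (x : E) : -(b / 2) * ‖x‖ ^ 2 = -b * ‖(√2)⁻¹ • x‖ ^ 2 := by
    rw [norm_smul, mul_pow, norm_inv, inv_pow, Real.norm_eq_abs, sq_abs, Real.sq_sqrt zero_le_two]
    ring
  simp_rw [hdilate]
  rw [eLpNorm_comp_const_smul μ p (by positivity) fun x : E => Real.exp (-b * ‖x‖ ^ 2), inv_pow,
    inv_inv, abs_of_pos (by positivity)]

variable {p} in
theorem eLpNorm_exp_neg_mul_norm_sq_translate_sub_le (hp : 1 ≤ p) {b : ℝ} (hb : 0 ≤ b) (y : E) :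
    eLpNorm (fun x => Real.exp (-b * ‖x - y‖ ^ 2) - Real.exp (-b * ‖x‖ ^ 2)) p μ ≤
      2 * ENNReal.ofReal √(b / 2) * ‖y‖ₑ * ENNReal.ofReal (√2 ^ finrank ℝ E) ^ (1 / p).toReal *
        eLpNorm (fun x : E => Real.exp (-b * ‖x‖ ^ 2)) p μ := by
  have hsq (x : E) : Real.exp (-b * ‖x‖ ^ 2) = Real.exp (-(b / 2) * ‖x‖ ^ 2) ^ 2 := by
    rw [← Real.exp_nat_mul]
    ring_nf
  have hlip : LipschitzWith (√(b / 2)).toNNReal fun x : E => Real.exp (-(b / 2) * ‖x‖ ^ 2) :=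
    lipschitzWith_exp_neg_mul_norm_sq (by positivity)
  calc eLpNorm (fun x => Real.exp (-b * ‖x - y‖ ^ 2) - Real.exp (-b * ‖x‖ ^ 2)) p μ
      = eLpNorm (fun x => Real.exp (-(b / 2) * ‖x - y‖ ^ 2) ^ 2 -
          Real.exp (-(b / 2) * ‖x‖ ^ 2) ^ 2) p μ := by simp only [hsq]
    _ ≤ 2 * ENNReal.ofReal √(b / 2) * ‖y‖ₑ *
          eLpNorm (fun x : E => Real.exp (-(b / 2) * ‖x‖ ^ 2)) p μ :=
        eLpNorm_sq_translate_sub_le hp hlip y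
    _ = _ := by rw [eLpNorm_exp_neg_half_mul_norm_sq, ← mul_assoc]

end Gaussian

section HeatKernel

variable {d : ℕ} {t : ℝ}

lemma euclideanHeatKernel_eq_smul_exp : euclideanHeatKernel d t =
    (4 * Real.pi * t) ^ (-(d : ℝ) / 2) • fun x => Real.exp (-(4 * t)⁻¹ * ‖x‖ ^ 2) := by
  ext x
  rw [euclideanHeatKernel, Pi.smul_apply, smul_eq_mul, neg_mul, inv_mul_eq_div,
    neg_div (4 * t)]

lemma continuous_euclideanHeatKernel : Continuous (euclideanHeatKernel d t) := by
  unfold euclideanHeatKernel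
  fun_prop

lemma norm_euclideanHeatKernel_le (ht : 0 ≤ t) (x : EuclideanSpace ℝ (Fin d)) :
    ‖euclideanHeatKernel d t x‖ ≤ (4 * Real.pi * t) ^ (-(d : ℝ) / 2) := by
  have hexp : Real.exp (-‖x‖ ^ 2 / (4 * t)) ≤ 1 :=
    Real.exp_le_one_iff.2 (div_nonpos_of_nonpos_of_nonneg (by simp) (by positivity))
  rw [euclideanHeatKernel, Real.norm_of_nonneg (by positivity)]
  exact mul_le_of_le_one_right (by positivity) hexp

/-- A modulus of continuity for translations of the heat kernel at time `t`: it bounds the `L^p`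
norm of `k_t(· - y) - k_t` relative to that of `k_t`, and is of order `‖y‖ / √t`. -/
noncomputable def heatKernelModulus (d : ℕ) (p : ℝ≥0∞) (t : ℝ) (y : EuclideanSpace ℝ (Fin d)) :
    ℝ≥0∞ :=
  2 * ENNReal.ofReal √((4 * t)⁻¹ / 2) * ‖y‖ₑ * ENNReal.ofReal (√2 ^ d) ^ (1 / p).toReal

lemma measurable_heatKernelModulus {p : ℝ≥0∞} : Measurable (heatKernelModulus d p t) := by
  unfold heatKernelModulus
  fun_prop

lemma tendsto_heatKernelModulus_atTop {p : ℝ≥0∞} (y : EuclideanSpace ℝ (Fin d)) :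
    Tendsto (heatKernelModulus d p · y) atTop (𝓝 0) := by
  have hinv : Tendsto (fun t : ℝ => (4 * t)⁻¹ / 2) atTop (𝓝 0) := by
    simpa using (tendsto_id.const_mul_atTop (four_pos (α := ℝ))).inv_tendsto_atTop.div_const 2
  have hsqrt : Tendsto (fun t : ℝ => ENNReal.ofReal √((4 * t)⁻¹ / 2)) atTop (𝓝 0) := by
    simpa using ENNReal.tendsto_ofReal hinv.sqrt
  have hconst : ENNReal.ofReal (√2 ^ d) ^ (1 / p).toReal ≠ ∞ :=
    ENNReal.rpow_ne_top_of_nonneg ENNReal.toReal_nonneg ENNReal.ofReal_ne_top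
  have htwo := ENNReal.Tendsto.const_mul (a := 2) hsqrt (by simp)
  have hnorm := ENNReal.Tendsto.mul_const htwo (.inr (enorm_ne_top (x := y)))
  simpa [heatKernelModulus] using ENNReal.Tendsto.mul_const hnorm (.inr hconst)

theorem eLpNorm_euclideanHeatKernel_translate_sub_le {p : ℝ≥0∞} (hp : 1 ≤ p) (ht : 0 ≤ t)
    (y : EuclideanSpace ℝ (Fin d)) :
    eLpNorm (fun x => euclideanHeatKernel d t (x - y) - euclideanHeatKernel d t x) p ≤
      heatKernelModulus d p t y * eLpNorm (euclideanHeatKernel d t) p := by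
  have hsmul : (fun x => euclideanHeatKernel d t (x - y) - euclideanHeatKernel d t x) =
      (4 * Real.pi * t) ^ (-(d : ℝ) / 2) •
        fun x => Real.exp (-(4 * t)⁻¹ * ‖x - y‖ ^ 2) - Real.exp (-(4 * t)⁻¹ * ‖x‖ ^ 2) := by
    ext x
    simp only [euclideanHeatKernel_eq_smul_exp, Pi.smul_apply, smul_sub]
  have hgauss := eLpNorm_exp_neg_mul_norm_sq_translate_sub_le
    (volume : Measure (EuclideanSpace ℝ (Fin d))) hp (b := (4 * t)⁻¹) (by positivity) y
  rw [finrank_euclideanSpace_fin, ← heatKernelModulus] at hgauss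
  rw [hsmul, euclideanHeatKernel_eq_smul_exp, eLpNorm_const_smul, eLpNorm_const_smul,
    mul_left_comm]
  gcongr

end HeatKernel

theorem stmt_8_general (d : ℕ) (p : ℝ≥0∞) (hp : 1 ≤ p) {F : Type*} [NormedAddCommGroup F]
    [NormedSpace ℝ F] [CompleteSpace F] (f : EuclideanSpace ℝ (Fin d) → F) (hf : Integrable f) :
    Tendsto
      (fun t : ℝ =>
        eLpNorm
            (fun x => (∫ y, euclideanHeatKernel d t (x - y) • f y) -
              euclideanHeatKernel d t x • ∫ y, f y) p volume /
          eLpNorm (euclideanHeatKernel d t) p volume)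
      atTop (𝓝 0) := by
  have hmajorant :
      Tendsto (fun t => ∫⁻ y, min 2 (heatKernelModulus d p t y) * ‖f y‖ₑ) atTop (𝓝 0) :=
    tendsto_lintegral_min_mul_zero (by simp) (fun _ => measurable_heatKernelModulus)
      tendsto_heatKernelModulus_atTop hf.1.enorm hf.2.ne
  refine tendsto_of_tendsto_of_tendsto_of_le_of_le' tendsto_const_nhds hmajorant
    (.of_forall fun _ => zero_le) ?_
  filter_upwards [eventually_ge_atTop 0] with t ht
  exact eLpNorm_integral_smul_sub_smul_integral_div_le hp continuous_euclideanHeatKernel.measurable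
    (norm_euclideanHeatKernel_le ht) measurable_heatKernelModulus
    (eLpNorm_euclideanHeatKernel_translate_sub_le hp ht) hf

/-- The classical Euclidean heat asymptotic: for `f ∈ L¹(ℝ^d)` with mass
`M₁(f) = ∫ f`, and every `p ∈ [1, ∞]`,
`‖k_t ⋆ f − M₁(f) k_t‖_{L^p} / ‖k_t‖_{L^p} → 0` as `t → ∞`. -/
theorem stmt_8 (d : ℕ) (hd : 1 ≤ d) (p : ℝ≥0∞) (hp : 1 ≤ p)
    (f : EuclideanSpace ℝ (Fin d) → ℝ) (hf : Integrable f) :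
    Filter.Tendsto
      (fun t : ℝ =>
        eLpNorm
            (fun x => (∫ y, euclideanHeatKernel d t (x - y) * f y) -
              (∫ y, f y) * euclideanHeatKernel d t x) p volume /
          eLpNorm (euclideanHeatKernel d t) p volume)
      Filter.atTop (nhds 0) := by
  simpa only [smul_eq_mul, mul_comm (∫ y, f y)] using stmt_8_general d p hp f hf
end

section
/- Let M ⊆ ℝ^r be a bounded convex set, ψ : M → ℝ a concave function, δ₀ ∈ M, and suppose there exist ε > 0 and c₀ > 0 such that ψ(δ) − ψ(δ₀) ≤ −c₀ ‖δ − δ₀‖² for every δ ∈ M with ‖δ − δ₀‖ ≤ ε. Then there exists c > 0 such that ψ(δ) − ψ(δ₀) ≤ −c ‖δ − δ₀‖² for every δ ∈ M. (This global quadratic decay estimate, equation (2.8) in the proof of Theorem 2.1 of the paper, upgrades the local quadratic bound at the concave maximum δ_p of ψ(δ) = ⟨δ, s_p⟩ − φ(δ) to all of the bounded convex set M.) -/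
/-!
A point `y` with `‖y - x‖ ≤ R` is compared with the point `z = lineMap x y t`, where `t = ε / R`.
Then `z` lies in the region where the local decay holds, and concavity says that `f` decreases
from `x` to `y` by at least `t⁻¹` times its decrease from `x` to `z`. A decay of order `p + 1`
at `z` thus becomes one at `y`, at the cost of a factor `t ^ p`.
-/

open AffineMap (lineMap)

theorem lineMap_le_map_lineMap_of_concaveOn {𝕜 E β : Type*} [Ring 𝕜] [PartialOrder 𝕜]
    [IsOrderedAddMonoid 𝕜] [AddCommGroup E] [Module 𝕜 E] [AddCommGroup β] [PartialOrder β]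
    [Module 𝕜 β] {s : Set E} {f : E → β} (hf : ConcaveOn 𝕜 s f) {x y : E} (hx : x ∈ s)
    (hy : y ∈ s) {t : 𝕜} (ht : t ∈ Set.Icc 0 1) :
    lineMap (f x) (f y) t ≤ f (lineMap x y t) := by
  simpa only [AffineMap.lineMap_apply_module] using
    hf.2 hx hy (sub_nonneg.2 ht.2) ht.1 (sub_add_cancel 1 t)

section LocalToGlobal

variable {E : Type*} [SeminormedAddCommGroup E] [NormedSpace ℝ E] {s : Set E} {f : E → ℝ} {x : E}
  {ε c₀ : ℝ} {p : ℕ}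

theorem sub_le_neg_mul_norm_pow_of_concaveOn (hf : ConcaveOn ℝ s f) (hx : x ∈ s) (hε : 0 < ε)
    (hloc : ∀ y ∈ s, ‖y - x‖ ≤ ε → f y - f x ≤ -c₀ * ‖y - x‖ ^ (p + 1))
    {R : ℝ} (hεR : ε ≤ R) {y : E} (hy : y ∈ s) (hyR : ‖y - x‖ ≤ R) :
    f y - f x ≤ -(c₀ * (ε / R) ^ p) * ‖y - x‖ ^ (p + 1) := by
  have hR : 0 < R := hε.trans_le hεR
  set t := ε / R
  have ht : 0 < t := div_pos hε hR
  have ht_mem : t ∈ Set.Icc (0 : ℝ) 1 := ⟨ht.le, (div_le_one hR).2 hεR⟩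
  have hz_norm : ‖lineMap x y t - x‖ = t * ‖y - x‖ := by
    rw [← dist_eq_norm, dist_lineMap_left, Real.norm_of_nonneg ht.le, dist_eq_norm']
  have hz_near : ‖lineMap x y t - x‖ ≤ ε :=
    calc ‖lineMap x y t - x‖ = t * ‖y - x‖ := hz_norm
      _ ≤ t * R := by gcongr
      _ = ε := div_mul_cancel₀ ε hR.ne'
  refine le_of_mul_le_mul_left ?_ ht
  calc t * (f y - f x) = lineMap (f x) (f y) t - f x := by
        rw [AffineMap.lineMap_apply_ring']; ring
    _ ≤ f (lineMap x y t) - f x :=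
        sub_le_sub_right (lineMap_le_map_lineMap_of_concaveOn hf hx hy ht_mem) _
    _ ≤ -c₀ * ‖lineMap x y t - x‖ ^ (p + 1) :=
        hloc _ (hf.1.lineMap_mem hx hy ht_mem) hz_near
    _ = t * (-(c₀ * t ^ p) * ‖y - x‖ ^ (p + 1)) := by rw [hz_norm]; ring

theorem stmt_15_general (hs : Bornology.IsBounded s) (hf : ConcaveOn ℝ s f) (hx : x ∈ s)
    (hε : 0 < ε) (hc₀ : 0 < c₀)
    (hloc : ∀ y ∈ s, ‖y - x‖ ≤ ε → f y - f x ≤ -c₀ * ‖y - x‖ ^ (p + 1)) :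
    ∃ c : ℝ, 0 < c ∧ ∀ y ∈ s, f y - f x ≤ -c * ‖y - x‖ ^ (p + 1) := by
  obtain ⟨R, hεR, hsR⟩ := hs.subset_closedBall_lt ε x
  have hR : 0 < R := hε.trans hεR
  exact ⟨c₀ * (ε / R) ^ p, by positivity, fun y hy =>
    sub_le_neg_mul_norm_pow_of_concaveOn hf hx hε hloc hεR.le hy
      (mem_closedBall_iff_norm.1 (hsR hy))⟩

end LocalToGlobal

/-- Equation (2.8) in the proof of Theorem 2.1: a local quadratic decay bound at
a point `δ₀` of a bounded convex set `M`, for a function `ψ` concave on `M`,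
upgrades to a global quadratic decay bound on all of `M`. -/
theorem stmt_15 (r : ℕ) (M : Set (EuclideanSpace ℝ (Fin r)))
    (hM : Bornology.IsBounded M) (hconv : Convex ℝ M)
    (ψ : EuclideanSpace ℝ (Fin r) → ℝ) (hψ : ConcaveOn ℝ M ψ)
    (δ₀ : EuclideanSpace ℝ (Fin r)) (hδ₀ : δ₀ ∈ M)
    (ε c₀ : ℝ) (hε : 0 < ε) (hc₀ : 0 < c₀)
    (hloc : ∀ δ ∈ M, ‖δ - δ₀‖ ≤ ε → ψ δ - ψ δ₀ ≤ -c₀ * ‖δ - δ₀‖ ^ 2) :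
    ∃ c : ℝ, 0 < c ∧ ∀ δ ∈ M, ψ δ - ψ δ₀ ≤ -c * ‖δ - δ₀‖ ^ 2 :=
  stmt_15_general (p := 1) hM hψ hδ₀ hε hc₀ hloc
end

section
/- Assume Σ_{v ∈ 𝒱} c_v v = 0 and that { v − v' : v, v' ∈ 𝒱 } spans V, let M be the interior of the convex hull of 𝒱, and define φ : M → ℝ by φ(δ) = sup_{x ∈ V} (⟨x, δ⟩ − log κ(x)). Then there exist constants 0 < c ≤ C such that c ‖δ‖² ≤ φ(δ) ≤ C ‖δ‖² for all δ ∈ M. (This is the two-sided quadratic comparison φ(δ) ≈ |δ|², equation (1.14) of the paper, for the rate function of the random walk.) -/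
open scoped RealInnerProductSpace

/-!
Write `Λ = log κ`. Since `Σ c_v v = 0` and `exp t ≤ t + exp (t ^ 2)`, one has `Λ x ≤ R ^ 2 ‖x‖ ^ 2`
where `R` bounds the norms of the points of `𝒱`; the Legendre transform reverses this inequality,
which gives the lower bound on `φ`.

For the upper bound, Jensen's inequality shows that every probability vector `p` on `𝒱` with
barycenter `δ` satisfies `φ δ ≤ χ²(p ‖ c)`. The weights `c` are positive with barycenter `0`, so the
convex hull of `𝒱` is a neighbourhood of `0` in the span of `𝒱`, and each `δ` in the hull is `t q`
with `q` in the hull, `t ∈ [0, 1]` and `t = O(‖δ‖)`. If `w` represents `q`, then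
`p = c + t (w - c)` represents `δ`, and `χ²(p ‖ c) = t ^ 2 χ²(w ‖ c) = O(‖δ‖ ^ 2)`.
-/

open Set Topology
open scoped Pointwise

section Weights

variable {ι : Type*} {s : Finset ι} {c p : ι → ℝ}

/-- The `χ²`-divergence `χ²(p ‖ c)` of the weights `p` from the reference weights `c` on the finite
set `s`; it bounds the relative entropy of `p` with respect to `c` from above. Meaningful only for
`c` nonvanishing on `s`, since `x / 0 = 0`. -/
noncomputable def chiSqDiv (s : Finset ι) (c p : ι → ℝ) : ℝ :=
  ∑ i ∈ s, (p i - c i) ^ 2 / c i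

theorem chiSqDiv_add_mul_sub (s : Finset ι) (c p : ι → ℝ) (t : ℝ) :
    chiSqDiv s c (fun i => c i + t * (p i - c i)) = t ^ 2 * chiSqDiv s c p := by
  simp only [chiSqDiv, Finset.mul_sum]
  exact Finset.sum_congr rfl fun i _ => by ring

theorem le_one_of_nonneg_of_sum_eq_one (hp : ∀ i ∈ s, 0 ≤ p i) (hpsum : ∑ i ∈ s, p i = 1)
    {i : ι} (hi : i ∈ s) : p i ≤ 1 :=
  hpsum ▸ Finset.single_le_sum hp hi

theorem chiSqDiv_le_sum_inv (hc : ∀ i ∈ s, 0 < c i) (hcsum : ∑ i ∈ s, c i = 1)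
    (hp : ∀ i ∈ s, 0 ≤ p i) (hpsum : ∑ i ∈ s, p i = 1) :
    chiSqDiv s c p ≤ ∑ i ∈ s, (c i)⁻¹ := by
  refine Finset.sum_le_sum fun i hi => ?_
  have hc_le : c i ≤ 1 := le_one_of_nonneg_of_sum_eq_one (fun j hj => (hc j hj).le) hcsum hi
  have hp_le : p i ≤ 1 := le_one_of_nonneg_of_sum_eq_one hp hpsum hi
  have hsq : (p i - c i) ^ 2 ≤ 1 := by
    rw [sq_le_one_iff_abs_le_one, abs_le]
    constructor <;> linarith [hc i hi, hp i hi]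
  rw [← one_div]
  exact div_le_div_of_nonneg_right hsq (hc i hi).le

-- Jensen is applied to the exponents `f i - β i`, where `β = p / c - 1` is the relative deviation:
-- since `1 + β ≤ exp β`, the shift by `β` turns the weights `p` into `c`, at the cost `∑ p β = χ²`.
theorem sum_mul_sub_log_sum_mul_exp_le_chiSqDiv (hc : ∀ i ∈ s, 0 < c i)
    (hcsum : ∑ i ∈ s, c i = 1) (hp : ∀ i ∈ s, 0 ≤ p i) (hpsum : ∑ i ∈ s, p i = 1) (f : ι → ℝ) :
    ∑ i ∈ s, p i * f i - Real.log (∑ i ∈ s, c i * Real.exp (f i)) ≤ chiSqDiv s c p := by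
  let β : ι → ℝ := fun i => (p i - c i) / c i
  have hpβ : ∀ i ∈ s, p i = c i * (1 + β i) := fun i hi => by
    have := (hc i hi).ne'
    simp only [β]
    field_simp
    ring
  have hmean : ∑ i ∈ s, p i * (f i - β i) = ∑ i ∈ s, p i * f i - chiSqDiv s c p := by
    have hcβ : ∑ i ∈ s, (p i - c i) = 0 := by rw [Finset.sum_sub_distrib, hpsum, hcsum, sub_self]
    rw [← sub_zero (_ - _), ← hcβ, chiSqDiv, ← Finset.sum_sub_distrib, ← Finset.sum_sub_distrib]
    refine Finset.sum_congr rfl fun i hi => ?_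
    have := (hc i hi).ne'
    simp only [β]
    field_simp
    ring
  have hterm : ∀ i ∈ s, p i * Real.exp (f i - β i) ≤ c i * Real.exp (f i) := fun i hi =>
    calc p i * Real.exp (f i - β i) = c i * ((β i + 1) * Real.exp (f i - β i)) := by
          rw [hpβ i hi]; ring
      _ ≤ c i * (Real.exp (β i) * Real.exp (f i - β i)) := by
          gcongr
          exacts [(hc i hi).le, Real.add_one_le_exp _]
      _ = c i * Real.exp (f i) := by rw [← Real.exp_add, add_sub_cancel]
  have hexp : Real.exp (∑ i ∈ s, p i * (f i - β i)) ≤ ∑ i ∈ s, c i * Real.exp (f i) :=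
    (convexOn_exp.map_sum_le hp hpsum fun _ _ => mem_univ _).trans (Finset.sum_le_sum hterm)
  have hlog := Real.log_le_log (Real.exp_pos _) hexp
  rw [Real.log_exp, hmean] at hlog
  linarith

theorem exp_le_self_add_exp_sq (t : ℝ) : Real.exp t ≤ t + Real.exp (t ^ 2) := by
  have hsq : t ^ 2 + 1 ≤ Real.exp (t ^ 2) := Real.add_one_le_exp _
  rcases le_total |t| 1 with ht | ht
  · linarith [(abs_le.1 (Real.abs_exp_sub_one_sub_id_le ht)).2]
  rcases le_abs.1 ht with ht | ht
  · have : Real.exp t ≤ Real.exp (t ^ 2) := Real.exp_le_exp.2 (by nlinarith)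
    linarith
  · have : Real.exp t ≤ 1 := Real.exp_le_one_iff.2 (by linarith)
    nlinarith

theorem log_sum_mul_exp_le_of_sq_le {f : ι → ℝ} (hc : ∀ i ∈ s, 0 ≤ c i)
    (hcsum : ∑ i ∈ s, c i = 1) (hmean : ∑ i ∈ s, c i * f i = 0) {b : ℝ}
    (hb : ∀ i ∈ s, f i ^ 2 ≤ b) :
    Real.log (∑ i ∈ s, c i * Real.exp (f i)) ≤ b := by
  have hle : ∑ i ∈ s, c i * Real.exp (f i) ≤ Real.exp b :=
    calc ∑ i ∈ s, c i * Real.exp (f i) ≤ ∑ i ∈ s, c i * (f i + Real.exp b) := by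
          gcongr with i hi
          · exact hc i hi
          · exact (exp_le_self_add_exp_sq _).trans (by gcongr; exact hb i hi)
      _ = Real.exp b := by
          simp only [mul_add, Finset.sum_add_distrib, hmean, ← Finset.sum_mul, hcsum, zero_add,
            one_mul]
  have hpos : 0 < ∑ i ∈ s, c i * Real.exp (f i) :=
    calc (0 : ℝ) < Real.exp (∑ i ∈ s, c i * f i) := Real.exp_pos _
      _ ≤ ∑ i ∈ s, c i * Real.exp (f i) :=
          convexOn_exp.map_sum_le hc hcsum fun _ _ => mem_univ _
  exact (Real.log_le_iff_le_exp hpos).2 hle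

end Weights

section ConvexHull

-- As `∑ c v • v = 0`, the coefficients `a` and `a + (1 - ∑ a) c` give the same combination; the
-- latter sum to `1` and are positive for small `a`, and `a ↦ ∑ a v • v` is open onto the span.
theorem convexHull_mem_nhdsWithin_span_of_sum_smul_eq_zero {E : Type*} [AddCommGroup E]
    [Module ℝ E] [TopologicalSpace E] [IsTopologicalAddGroup E] [ContinuousSMul ℝ E]
    [T2Space E] {s : Finset E} {c : E → ℝ} (hc : ∀ v ∈ s, 0 < c v)
    (hcsum : ∑ v ∈ s, c v = 1) (hzero : ∑ v ∈ s, c v • v = 0) :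
    convexHull ℝ (s : Set E) ∈ 𝓝[Submodule.span ℝ (s : Set E)] 0 := by
  let T : (E → ℝ) →ₗ[ℝ] Submodule.span ℝ (s : Set E) :=
    (∑ v ∈ s, (LinearMap.proj v : (E → ℝ) →ₗ[ℝ] ℝ).smulRight v).codRestrict _ fun a => by
      simpa using Submodule.sum_mem _ fun v hv =>
        Submodule.smul_mem _ (a v) (Submodule.subset_span hv)
  have hT : ∀ a, (T a : E) = ∑ v ∈ s, a v • v := fun a => by simp [T]
  have hTsurj : Function.Surjective T := fun ⟨δ, hδ⟩ => by
    obtain ⟨a, -, ha⟩ := Submodule.mem_span_finset.1 hδ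
    exact ⟨a, Subtype.ext ((hT a).trans ha)⟩
  have hTopen : IsOpenMap T := T.isOpenMap_of_finiteDimensional hTsurj
  let b : (E → ℝ) → E → ℝ := fun a v => a v + (1 - ∑ w ∈ s, a w) * c v
  have hbpos : ∀ᶠ a in 𝓝 (0 : E → ℝ), ∀ v ∈ s, 0 < b a v := by
    refine (Filter.eventually_all_finset s).2 fun v hv => ?_
    have hcont : Continuous fun a => b a v := by fun_prop
    exact hcont.continuousAt.eventually (lt_mem_nhds (by simpa [b] using hc v hv))
  have hmem : ∀ a, (∀ v ∈ s, 0 < b a v) → (T a : E) ∈ convexHull ℝ (s : Set E) := fun a ha => by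
    refine Finset.mem_convexHull'.2 ⟨b a, fun v hv => (ha v hv).le, ?_, ?_⟩
    · simp only [b, Finset.sum_add_distrib, ← Finset.mul_sum, hcsum]
      ring
    · simp only [b, add_smul, mul_smul, Finset.sum_add_distrib, ← Finset.smul_sum, hzero, hT,
        smul_zero, add_zero]
  refine (preimage_coe_mem_nhds_subtype (a := (0 : Submodule.span ℝ (s : Set E)))).1 ?_
  rw [← map_zero T]
  exact Filter.mem_of_superset (hTopen.image_mem_nhds hbpos) (image_subset_iff.2 hmem)

theorem exists_mem_smul_of_mem_nhdsWithin {E : Type*} [NormedAddCommGroup E] [NormedSpace ℝ E]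
    {A : Set E} {W : Submodule ℝ E} (hAW : A ⊆ W) (hA : A ∈ 𝓝[W] 0) :
    ∃ B : ℝ, ∀ δ ∈ A, ∃ t ∈ Icc (0 : ℝ) 1, t ≤ B * ‖δ‖ ∧ δ ∈ t • A := by
  obtain ⟨ρ, hρ, hball⟩ :=
    (nhdsWithin_hasBasis Metric.nhds_basis_closedBall (W : Set E)).mem_iff.1 hA
  refine ⟨ρ⁻¹, fun δ hδ => ?_⟩
  rcases le_total (ρ⁻¹ * ‖δ‖) 1 with hsmall | hlarge
  · refine ⟨ρ⁻¹ * ‖δ‖, ⟨by positivity, hsmall⟩, le_rfl, ?_⟩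
    rcases eq_or_ne δ 0 with rfl | hne
    · exact ⟨0, hδ, by simp⟩
    have hnorm : ‖δ‖ ≠ 0 := norm_ne_zero_iff.2 hne
    rw [mem_smul_set_iff_inv_smul_mem₀ (by positivity)]
    refine hball ⟨?_, W.smul_mem _ (hAW hδ)⟩
    rw [mem_closedBall_zero_iff, norm_smul, norm_inv, norm_mul, norm_norm, norm_inv,
      Real.norm_of_nonneg hρ.le]
    field_simp
    rfl
  · exact ⟨1, by simp, hlarge, by simpa using hδ⟩

theorem exists_weights_chiSqDiv_le {E : Type*} [NormedAddCommGroup E] [NormedSpace ℝ E]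
    {s : Finset E} {c : E → ℝ} (hc : ∀ v ∈ s, 0 < c v) (hcsum : ∑ v ∈ s, c v = 1)
    (hzero : ∑ v ∈ s, c v • v = 0) :
    ∃ C : ℝ, ∀ δ ∈ convexHull ℝ (s : Set E), ∃ p : E → ℝ, (∀ v ∈ s, 0 ≤ p v) ∧
      ∑ v ∈ s, p v = 1 ∧ ∑ v ∈ s, p v • v = δ ∧ chiSqDiv s c p ≤ C * ‖δ‖ ^ 2 := by
  have hspan : convexHull ℝ (s : Set E) ⊆ Submodule.span ℝ (s : Set E) :=
    convexHull_min Submodule.subset_span (Submodule.convex _)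
  obtain ⟨B, hscale⟩ := exists_mem_smul_of_mem_nhdsWithin hspan
    (convexHull_mem_nhdsWithin_span_of_sum_smul_eq_zero hc hcsum hzero)
  refine ⟨B ^ 2 * ∑ v ∈ s, (c v)⁻¹, fun δ hδ => ?_⟩
  obtain ⟨t, ⟨ht0, ht1⟩, htB, q, hq, rfl⟩ := hscale δ hδ
  obtain ⟨w, hw, hwsum, rfl⟩ := Finset.mem_convexHull'.1 hq
  refine ⟨fun v => c v + t * (w v - c v), fun v hv => ?_, ?_, ?_, ?_⟩
  · nlinarith [mul_nonneg ht0 (hw v hv), mul_nonneg (sub_nonneg.2 ht1) (hc v hv).le]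
  · simp [Finset.sum_add_distrib, ← Finset.mul_sum, hcsum, hwsum]
  · simp [add_smul, mul_smul, sub_smul, Finset.sum_add_distrib, ← Finset.smul_sum, hzero]
  · have hinv : 0 ≤ ∑ v ∈ s, (c v)⁻¹ := Finset.sum_nonneg fun v hv => (inv_pos.2 (hc v hv)).le
    calc chiSqDiv s c (fun v => c v + t * (w v - c v)) = t ^ 2 * chiSqDiv s c w :=
          chiSqDiv_add_mul_sub s c w t
      _ ≤ t ^ 2 * ∑ v ∈ s, (c v)⁻¹ := by
          gcongr
          exact chiSqDiv_le_sum_inv hc hcsum hw hwsum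
      _ ≤ (B * ‖t • ∑ v ∈ s, w v • v‖) ^ 2 * ∑ v ∈ s, (c v)⁻¹ := by gcongr
      _ = B ^ 2 * (∑ v ∈ s, (c v)⁻¹) * ‖t • ∑ v ∈ s, w v • v‖ ^ 2 := by ring

end ConvexHull

section RateFunction

variable {E : Type*} [NormedAddCommGroup E] [InnerProductSpace ℝ E]

/-- The logarithmic Laplace transform of the measure `∑ v ∈ s, c v • δ_v`; this is `log κ` for
`s = 𝒱`. -/
noncomputable def logLaplace (s : Finset E) (c : E → ℝ) (x : E) : ℝ :=
  Real.log (∑ v ∈ s, c v * Real.exp ⟪x, v⟫)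

/-- The Legendre transform (convex conjugate) of `f`, which turns `log κ` into the rate function
`φ`. The supremum is taken in `ℝ`, so it is `0` at points where the true value is infinite. -/
noncomputable def legendreTransform (f : E → ℝ) (δ : E) : ℝ :=
  ⨆ x, (⟪x, δ⟫ - f x)

theorem le_legendreTransform_of_le_mul_sq {f : E → ℝ} {K : ℝ} (hK : 0 < K)
    (hf : ∀ x, f x ≤ K * ‖x‖ ^ 2) {δ : E} (hbdd : BddAbove (range fun x => ⟪x, δ⟫ - f x)) :
    (4 * K)⁻¹ * ‖δ‖ ^ 2 ≤ legendreTransform f δ := by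
  -- The maximizer of `⟪x, δ⟫ - K * ‖x‖ ^ 2`.
  let x : E := (2 * K)⁻¹ • δ
  calc (4 * K)⁻¹ * ‖δ‖ ^ 2 = ⟪x, δ⟫ - K * ‖x‖ ^ 2 := by
        rw [real_inner_smul_left, real_inner_self_eq_norm_sq, norm_smul, mul_pow,
          Real.norm_eq_abs, sq_abs]
        field_simp
        ring
    _ ≤ ⟪x, δ⟫ - f x := sub_le_sub_left (hf x) _
    _ ≤ legendreTransform f δ := le_ciSup hbdd x

theorem exists_logLaplace_le_mul_sq {s : Finset E} {c : E → ℝ} (hc : ∀ v ∈ s, 0 ≤ c v)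
    (hcsum : ∑ v ∈ s, c v = 1) (hzero : ∑ v ∈ s, c v • v = 0) :
    ∃ K : ℝ, 0 < K ∧ ∀ x, logLaplace s c x ≤ K * ‖x‖ ^ 2 := by
  obtain ⟨R, hR, hnorm⟩ := s.finite_toSet.isBounded.exists_pos_norm_le
  refine ⟨R ^ 2, by positivity, fun x => log_sum_mul_exp_le_of_sq_le hc hcsum ?_ fun v hv => ?_⟩
  · calc ∑ v ∈ s, c v * ⟪x, v⟫ = ⟪x, ∑ v ∈ s, c v • v⟫ := by
          simp only [inner_sum, real_inner_smul_right]
      _ = 0 := by rw [hzero, inner_zero_right]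
  · calc ⟪x, v⟫ ^ 2 ≤ (‖x‖ * ‖v‖) ^ 2 := sq_le_sq' (neg_le_of_abs_le (abs_real_inner_le_norm x v))
          (real_inner_le_norm x v)
      _ ≤ (‖x‖ * R) ^ 2 := by gcongr; exact hnorm v hv
      _ = R ^ 2 * ‖x‖ ^ 2 := by ring

theorem exists_inner_sub_logLaplace_le_mul_sq {s : Finset E} {c : E → ℝ} (hc : ∀ v ∈ s, 0 < c v)
    (hcsum : ∑ v ∈ s, c v = 1) (hzero : ∑ v ∈ s, c v • v = 0) :
    ∃ C : ℝ, ∀ δ ∈ convexHull ℝ (s : Set E), ∀ x, ⟪x, δ⟫ - logLaplace s c x ≤ C * ‖δ‖ ^ 2 := by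
  obtain ⟨C, hC⟩ := exists_weights_chiSqDiv_le hc hcsum hzero
  refine ⟨C, fun δ hδ x => ?_⟩
  obtain ⟨p, hp, hpsum, hpδ, hchi⟩ := hC δ hδ
  have hinner : ⟪x, δ⟫ = ∑ v ∈ s, p v * ⟪x, v⟫ := by
    simp only [← hpδ, inner_sum, real_inner_smul_right]
  rw [hinner]
  exact (sum_mul_sub_log_sum_mul_exp_le_chiSqDiv hc hcsum hp hpsum _).trans hchi

theorem stmt_17_general (s : Finset E) (c : E → ℝ) (hc : ∀ v ∈ s, 0 < c v)
    (hcsum : ∑ v ∈ s, c v = 1) (hzero : ∑ v ∈ s, c v • v = 0) :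
    ∃ cl CL : ℝ, 0 < cl ∧ cl ≤ CL ∧ ∀ δ ∈ convexHull ℝ (s : Set E),
      cl * ‖δ‖ ^ 2 ≤ legendreTransform (logLaplace s c) δ ∧
        legendreTransform (logLaplace s c) δ ≤ CL * ‖δ‖ ^ 2 := by
  obtain ⟨K, hK, hlower⟩ := exists_logLaplace_le_mul_sq (fun v hv => (hc v hv).le) hcsum hzero
  obtain ⟨C, hupper⟩ := exists_inner_sub_logLaplace_le_mul_sq hc hcsum hzero
  refine ⟨(4 * K)⁻¹, max (4 * K)⁻¹ C, by positivity, le_max_left _ _, fun δ hδ => ⟨?_, ?_⟩⟩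
  · exact le_legendreTransform_of_le_mul_sq hK hlower ⟨_, forall_mem_range.2 (hupper δ hδ)⟩
  · calc legendreTransform (logLaplace s c) δ ≤ C * ‖δ‖ ^ 2 := ciSup_le (hupper δ hδ)
      _ ≤ max (4 * K)⁻¹ C * ‖δ‖ ^ 2 := by gcongr; exact le_max_right _ _

end RateFunction

/-- Equation (1.14): the rate function `φ(δ) = sup_x (⟨x, δ⟩ − log κ(x))` of the
random walk satisfies the two-sided quadratic comparison `φ(δ) ≈ ‖δ‖²` on the
interior `M` of the convex hull of `𝒱`. -/
theorem stmt_17 (r : ℕ) (hr : 1 ≤ r)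
    (𝒱 : Finset (EuclideanSpace ℝ (Fin r))) (h𝒱 : 𝒱.Nonempty)
    (c : EuclideanSpace ℝ (Fin r) → ℝ) (hc : ∀ v ∈ 𝒱, 0 < c v)
    (hsum : ∑ v ∈ 𝒱, c v = 1)
    (κ : EuclideanSpace ℝ (Fin r) → ℝ)
    (hκ : ∀ x, κ x = ∑ v ∈ 𝒱, c v * Real.exp ⟪x, v⟫)
    (hzero : ∑ v ∈ 𝒱, c v • v = 0)
    (hspan : Submodule.span ℝ
        {d : EuclideanSpace ℝ (Fin r) | ∃ v ∈ 𝒱, ∃ v' ∈ 𝒱, d = v - v'} = ⊤)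
    (M : Set (EuclideanSpace ℝ (Fin r)))
    (hM : M = interior (convexHull ℝ (𝒱 : Set (EuclideanSpace ℝ (Fin r)))))
    (φ : EuclideanSpace ℝ (Fin r) → ℝ)
    (hφ : ∀ δ, φ δ = ⨆ x : EuclideanSpace ℝ (Fin r), (⟪x, δ⟫ - Real.log (κ x))) :
    ∃ cl CL : ℝ, 0 < cl ∧ cl ≤ CL ∧
      ∀ δ ∈ M, cl * ‖δ‖ ^ 2 ≤ φ δ ∧ φ δ ≤ CL * ‖δ‖ ^ 2 := by
  obtain rfl : φ = legendreTransform (logLaplace 𝒱 c) :=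
    funext fun δ => by simp only [hφ, hκ, legendreTransform, logLaplace]
  obtain ⟨cl, CL, hcl, hle, hbounds⟩ := stmt_17_general 𝒱 c hc hsum hzero
  exact ⟨cl, CL, hcl, hle, fun δ hδ => hbounds δ (interior_subset (hM ▸ hδ))⟩
end
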